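/- arXiv:1503.05420 — 3 statements merged into one kernel-verified Lean document; each statement's English description precedes it below -/
import Mathlib

section
/- (Macaulay's theorem) Let S = ℂ[x_0, …, x_n] with its standard grading, let d ≥ 1, let V ⊆ S_d be a ℂ-linear subspace, and let c = dim_ℂ S_d − dim_ℂ V be its codimension. Let (ε_d, …, ε_1) be the Macaulay expansion of c in base d. Then the codimension in S_{d+1} of the ℂ-linear span of { ℓ·f : ℓ ∈ S_1, f ∈ V } is at most c^{⟨d⟩} = Σ_{i=1}^d C(i+ε_i+1, i+1). -/
open MvPolynomial

/-- `ε` (restricted to indices `1,…,d`) is the Macaulay expansion of `c` in base `d`. -/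
def IsMacaulayExpansion (c d : ℕ) (ε : ℕ → ℤ) : Prop :=
  (∀ i, 1 ≤ i → i ≤ d → (-1 : ℤ) ≤ ε i) ∧
  (∀ i j, 1 ≤ i → i ≤ j → j ≤ d → ε i ≤ ε j) ∧
  c = ∑ i ∈ Finset.Icc 1 d, (((i : ℤ) + ε i).toNat).choose i

/-!
Dually, the claim bounds a space `W` of functionals on `S_{d+1}`, namely those killing `S_1 V`:
contraction by any linear form sends `W` into the annihilator of `V`, whose dimension is `c`.
So let commuting operators lower degrees, without common kernel in positive degree, and let `W` be
a finite-dimensional space in degree `d + 1`. Over an infinite field there are operators `l`, `m`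
for which the dimensions of `l W`, `m l W` and `l (W ∩ ker m)` are as large as possible: that of
`l W` among all `l`, those of `m l W` and `l (W ∩ ker m)` when only `m`, respectively `l`, varies.

Suppose `dim W` exceeds the bound determined by `dim l W`. As `dim m W ≤ dim l W`, the space
`W ∩ ker m` is large; one fewer operator acts effectively on it, so by induction on the number of
operators `l (W ∩ ker m)` is large. Commutativity places it inside `l W ∩ ker m`, hence `m l W` is
small. By genericity of `m`, induction on the degree applied to `l W` now makes `dim l W` too small,
a contradiction. The numerical input is Pascal's rule for the Macaulay sums.
-/

open Filter Module
open scoped Polynomial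

section MacaulaySums

/-- The value of a Macaulay expansion in base `d`, with `e i` standing for `ε_{i+1} + 1`; the shift
makes the coefficients natural numbers indexed from `0`. -/
def macaulaySum (d : ℕ) (e : ℕ → ℕ) : ℕ := ∑ i ∈ Finset.range d, (i + e i).choose (i + 1)

/-- The number `c^⟨d⟩` bounding the growth of `c = macaulaySum d e`, in the same encoding. -/
def macaulayGrowth (d : ℕ) (e : ℕ → ℕ) : ℕ := ∑ i ∈ Finset.range d, (i + 1 + e i).choose (i + 2)

lemma macaulaySum_succ (d : ℕ) (e : ℕ → ℕ) :
    macaulaySum (d + 1) e = macaulayGrowth d (fun i ↦ e (i + 1)) + e 0 := by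
  simp [macaulaySum, macaulayGrowth, Finset.sum_range_succ']

lemma macaulayGrowth_eq_add (d : ℕ) (e : ℕ → ℕ) :
    macaulayGrowth d e = macaulaySum d e + macaulayGrowth d (fun i ↦ e i - 1) := by
  simp only [macaulayGrowth, macaulaySum, ← Finset.sum_add_distrib]
  refine Finset.sum_congr rfl fun i _ ↦ ?_
  cases e i with
  | zero => simp
  | succ a =>
    rw [Nat.add_sub_cancel, ← add_assoc, Nat.choose_succ_succ', add_right_comm i 1 a,
      add_assoc i a 1]

lemma macaulaySum_succ_eq_add (d : ℕ) (e : ℕ → ℕ) :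
    macaulaySum (d + 1) e = macaulaySum (d + 1) (fun i ↦ e i - 1) +
      macaulaySum d (fun i ↦ e (i + 1)) + min 1 (e 0) := by
  have := macaulayGrowth_eq_add d fun i ↦ e (i + 1)
  simp only [macaulaySum_succ]
  omega

lemma macaulaySum_const_add_one (d a : ℕ) : macaulaySum d (fun _ ↦ a) + 1 = (d + a).choose d := by
  induction d with
  | zero => simp [macaulaySum]
  | succ d ih =>
    simp only [macaulaySum] at ih ⊢
    rw [Finset.sum_range_succ, add_right_comm, ih, add_right_comm d 1 a, Nat.choose_succ_succ']

lemma macaulayGrowth_const_add (d a : ℕ) :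
    macaulayGrowth d (fun _ ↦ a) + (a + 1) = (d + 1 + a).choose (d + 1) := by
  rw [← macaulaySum_const_add_one, macaulaySum_succ, add_assoc]

-- Only the first nonzero entry, at `j`, and the zeros before it change: all of them become `a`,
-- where `e j = a + 1`.
lemma exists_sum_range_borrow {d : ℕ} {e : ℕ → ℕ} (he : Monotone e) (hne : ∃ j < d, e j ≠ 0) :
    ∃ j a e', Monotone e' ∧ ∀ F : ℕ → ℕ → ℕ, (∀ i, F i 0 = 0) →
      ∑ i ∈ Finset.range d, F i (e' i) + F j (a + 1) =
        ∑ i ∈ Finset.range d, F i (e i) + ∑ i ∈ Finset.range (j + 1), F i a := by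
  obtain ⟨j, ⟨hjd, hj⟩, hmin⟩ := Nat.findX hne
  obtain ⟨a, ha⟩ := Nat.exists_eq_succ_of_ne_zero hj
  obtain ⟨k, rfl⟩ := Nat.exists_eq_add_of_le (show j + 1 ≤ d from hjd)
  refine ⟨j, a, fun i ↦ if i ≤ j then a else e i, fun i i' hi ↦ ?_, fun F hF ↦ ?_⟩
  · have := he hi
    have (h : j < i') := he h.le
    grind
  · have hhead : ∑ i ∈ Finset.range (j + 1), F i (e i) = F j (a + 1) := by
      rw [Finset.sum_range_succ, ha, Finset.sum_eq_zero, zero_add]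
      intro i hi
      have : e i = 0 := by grind
      rw [this, hF]
    have hhead' : ∑ i ∈ Finset.range (j + 1), F i (if i ≤ j then a else e i) =
        ∑ i ∈ Finset.range (j + 1), F i a :=
      Finset.sum_congr rfl fun i hi ↦ by grind
    have htail' : ∑ i ∈ Finset.range k, F (j + 1 + i) (if j + 1 + i ≤ j then a else e (j + 1 + i)) =
        ∑ i ∈ Finset.range k, F (j + 1 + i) (e (j + 1 + i)) :=
      Finset.sum_congr rfl fun i _ ↦ by grind
    simp only [Finset.sum_range_add _ (j + 1) k, hhead, hhead', htail']
    omega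

lemma exists_macaulaySum_add_one_eq {d : ℕ} {e : ℕ → ℕ} (he : Monotone e)
    (hpos : 0 < macaulaySum d e) :
    ∃ e', Monotone e' ∧ macaulaySum d e' + 1 = macaulaySum d e ∧
      macaulayGrowth d e' < macaulayGrowth d e := by
  have hne : ∃ j < d, e j ≠ 0 := by
    by_contra! hzero
    exact hpos.ne' (Finset.sum_eq_zero fun i hi ↦ by simp [hzero i (Finset.mem_range.mp hi)])
  obtain ⟨j, a, e', he', hborrow⟩ := exists_sum_range_borrow he hne
  refine ⟨e', he', ?_, ?_⟩
  · have hsum : macaulaySum d e' + (j + (a + 1)).choose (j + 1) =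
        macaulaySum d e + macaulaySum (j + 1) (fun _ ↦ a) :=
      hborrow (fun i x ↦ (i + x).choose (i + 1)) (by simp)
    have hconst := macaulaySum_const_add_one (j + 1) a
    rw [Nat.add_right_comm, Nat.add_assoc] at hconst
    omega
  · have hgrowth : macaulayGrowth d e' + (j + 1 + (a + 1)).choose (j + 1 + 1) =
        macaulayGrowth d e + macaulayGrowth (j + 1) (fun _ ↦ a) :=
      hborrow (fun i x ↦ (i + 1 + x).choose (i + 2)) (by simp)
    have hconst := macaulayGrowth_const_add (j + 1) a
    rw [Nat.add_right_comm (j + 1), Nat.add_assoc (j + 1)] at hconst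
    omega

lemma exists_macaulaySum_eq {d b : ℕ} {e : ℕ → ℕ} (he : Monotone e) (hb : b ≤ macaulaySum d e) :
    ∃ e', Monotone e' ∧ macaulaySum d e' = b ∧
      macaulayGrowth d e' + macaulaySum d e ≤ macaulayGrowth d e + b := by
  generalize hs : macaulaySum d e = s at hb ⊢
  induction s, hb using Nat.le_induction generalizing e with
  | base => exact ⟨e, he, hs, by omega⟩
  | succ k _ ih =>
    obtain ⟨e₁, he₁, hsum₁, hgrowth₁⟩ := exists_macaulaySum_add_one_eq (d := d) he (by omega)
    obtain ⟨e₂, he₂, hsum₂, hgrowth₂⟩ := ih he₁ (by omega)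
    exact ⟨e₂, he₂, hsum₂, by omega⟩

lemma exists_macaulayGrowth_lt {d b a : ℕ} {e : ℕ → ℕ} (he : Monotone e)
    (hb : b < macaulaySum d e + min 1 a) :
    ∃ e', Monotone e' ∧ b ≤ macaulaySum d e' ∧ macaulayGrowth d e' < macaulayGrowth d e + a := by
  obtain rfl | ha := Nat.eq_zero_or_pos a
  · obtain ⟨e', he', hsum, hgrowth⟩ := exists_macaulaySum_eq (d := d) (b := b) he (by omega)
    exact ⟨e', he', hsum.ge, by omega⟩
  · exact ⟨e, he, by omega, by omega⟩

lemma IsMacaulayExpansion.exists_monotone {c d : ℕ} {ε : ℕ → ℤ} (h : IsMacaulayExpansion c d ε) :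
    ∃ e, Monotone e ∧ macaulaySum d e = c ∧ macaulayGrowth d e =
      ∑ i ∈ Finset.Icc 1 d, (((i : ℤ) + ε i + 1).toNat).choose (i + 1) := by
  obtain ⟨hlow, hmono, rfl⟩ := h
  have sum_Icc (F : ℕ → ℕ) : ∑ i ∈ Finset.Icc 1 d, F i = ∑ i ∈ Finset.range d, F (i + 1) := by
    rw [Finset.range_eq_Ico, Finset.sum_Ico_add', ← Finset.Ico_add_one_right_eq_Icc, zero_add]
  refine ⟨fun i ↦ (ε (min (i + 1) d) + 1).toNat, fun i j hij ↦ ?_, ?_, ?_⟩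
  · rcases Nat.eq_zero_or_pos d with rfl | hd
    · simp
    · have := hmono (min (i + 1) d) (min (j + 1) d) (by omega) (by omega) (by omega)
      dsimp only
      omega
  all_goals
    rw [sum_Icc]
    refine Finset.sum_congr rfl fun i hi ↦ ?_
    rw [Finset.mem_range] at hi
    have := hlow (i + 1) (by omega) hi
    simp only [min_eq_left (show i + 1 ≤ d by omega)]
    congr 1
    omega

end MacaulaySums

section GenericRank

variable {K M N : Type*} [Field K] [AddCommGroup M] [Module K M] [AddCommGroup N] [Module K N]

lemma eventually_cofinite_linearIndependent_add_smul {ι : Type*} [Finite ι] {u v : ι → M} {t₀ : K}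
    (h : LinearIndependent K fun i ↦ u i + t₀ • v i) :
    ∀ᶠ t : K in cofinite, LinearIndependent K fun i ↦ u i + t • v i := by
  classical
  have := Fintype.ofFinite ι
  obtain ⟨g, hg⟩ := LinearMap.exists_leftInverse_of_injective _
    (LinearMap.ker_eq_bot.mpr h.fintypeLinearCombination_injective)
  let A : Matrix ι ι K := .of fun i ↦ g (u i)
  let B : Matrix ι ι K := .of fun i ↦ g (v i)
  have rows (t : K) : (A + t • B).row = g ∘ fun i ↦ u i + t • v i := by
    ext i j
    simp [A, B]
  let p : K[X] := (A.map Polynomial.C + (Polynomial.X : K[X]) • B.map Polynomial.C).det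
  have eval_p (t : K) : p.eval t = (A + t • B).det := by
    rw [← Polynomial.coe_evalRingHom, RingHom.map_det]
    congr 1
    ext i j
    simp [mul_comm t]
  have det_t₀ : A + t₀ • B = 1 := by
    ext i j
    have := congr_fun (LinearMap.congr_fun hg (Pi.single i 1)) j
    simpa [A, B, Matrix.one_apply, Pi.single_apply, eq_comm] using this
  have hp : p ≠ 0 := by
    intro hp
    simpa [hp, det_t₀] using eval_p t₀
  have hfin : {t | p.IsRoot t}.Finite := Polynomial.finite_setOfPred_isRoot hp
  filter_upwards [hfin.compl_mem_cofinite] with t ht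
  have hdet : (A + t • B).det ≠ 0 := by rwa [← eval_p]
  exact .of_comp g (rows t ▸ Matrix.linearIndependent_rows_of_det_ne_zero hdet)

lemma eventually_cofinite_finrank_map_le (W : Submodule K M) [FiniteDimensional K W]
    (F G : M →ₗ[K] N) (t₀ : K) :
    ∀ᶠ t : K in cofinite, finrank K (W.map (F + t₀ • G)) ≤ finrank K (W.map (F + t • G)) := by
  let b := finBasis K (W.map (F + t₀ • G))
  choose w hw hwb using fun i ↦ (b i).2
  have hli : LinearIndependent K fun i ↦ F (w i) + t₀ • G (w i) := by
    have := b.linearIndependent.map' (W.map (F + t₀ • G)).subtype (Submodule.ker_subtype _)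
    simp only [Function.comp_def, Submodule.subtype_apply, ← hwb] at this
    exact this
  filter_upwards [eventually_cofinite_linearIndependent_add_smul hli] with t ht
  have hmem (i) : F (w i) + t • G (w i) ∈ W.map (F + t • G) := ⟨w i, hw i, rfl⟩
  have : LinearIndependent K fun i ↦ (⟨_, hmem i⟩ : W.map (F + t • G)) :=
    .of_comp (Submodule.subtype _) ht
  simpa using this.fintype_card_le_finrank

lemma finrank_eq_finrank_map_add_finrank_inf_ker (W : Submodule K M) [FiniteDimensional K W]
    (l : M →ₗ[K] N) :
    finrank K W = finrank K (W.map l) + finrank K (W ⊓ LinearMap.ker l : Submodule K M) := by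
  rw [← (l.domRestrict W).finrank_range_add_finrank_ker, LinearMap.range_domRestrict,
    LinearMap.ker_domRestrict, ← Submodule.map_comap_subtype, Submodule.finrank_map_subtype_eq]

lemma finrank_map_prod {N' : Type*} [AddCommGroup N'] [Module K N']
    (W : Submodule K M) [FiniteDimensional K W] (m : M →ₗ[K] N) (l : M →ₗ[K] N') :
    finrank K (W.map (m.prod l)) =
      finrank K (W.map m) + finrank K ((W ⊓ LinearMap.ker m).map l) := by
  have : FiniteDimensional K (W ⊓ LinearMap.ker m : Submodule K M) :=
    Submodule.finiteDimensional_of_le inf_le_left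
  have hprod := finrank_eq_finrank_map_add_finrank_inf_ker W (m.prod l)
  have hm := finrank_eq_finrank_map_add_finrank_inf_ker W m
  have hl := finrank_eq_finrank_map_add_finrank_inf_ker (W ⊓ LinearMap.ker m) l
  rw [LinearMap.ker_prod, ← inf_assoc] at hprod
  omega

/-- Lower semicontinuity along lines for the cofinite topology: at all but finitely many points of
the line through `x` and `y`, the value of `r` is at least its values at `x` and at `y`. Ranks of
linear maps depending linearly on a parameter behave in this way. -/
def LineSemicontinuous (K : Type*) {X : Type*} [Field K] [AddCommGroup X] [Module K X]
    (r : X → ℕ) : Prop :=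
  ∀ x y, ∀ᶠ t : K in cofinite, r x ≤ r (x + t • (y - x)) ∧ r y ≤ r (x + t • (y - x))

variable {X : Type*} [AddCommGroup X] [Module K X] {r s : X → ℕ}

lemma LineSemicontinuous.add (hr : LineSemicontinuous K r) (hs : LineSemicontinuous K s) :
    LineSemicontinuous K fun x ↦ r x + s x := fun x y ↦ by
  filter_upwards [hr x y, hs x y] with t hrt hst
  exact ⟨add_le_add hrt.1 hst.1, add_le_add hrt.2 hst.2⟩

lemma LineSemicontinuous.le_of_add_le [Infinite K] (hr : LineSemicontinuous K r)
    (hs : LineSemicontinuous K s) {x : X} (hmax : ∀ y, r y + s y ≤ r x + s x) (y : X) :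
    r y ≤ r x := by
  obtain ⟨t, ⟨-, hrt⟩, hst, -⟩ := ((hr x y).and (hs x y)).exists
  have := hmax (x + t • (y - x))
  omega

lemma lineSemicontinuous_finrank_map (W : Submodule K M) [FiniteDimensional K W]
    {Φ : X → M →ₗ[K] N} (hΦ : ∀ x y (t : K), Φ (x + t • (y - x)) = Φ x + t • (Φ y - Φ x)) :
    LineSemicontinuous K fun x ↦ finrank K (W.map (Φ x)) := fun x y ↦ by
  have h₀ := eventually_cofinite_finrank_map_le W (Φ x) (Φ y - Φ x) 0
  have h₁ := eventually_cofinite_finrank_map_le W (Φ x) (Φ y - Φ x) 1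
  rw [zero_smul, add_zero] at h₀
  rw [one_smul, add_sub_cancel] at h₁
  filter_upwards [h₀, h₁] with t ht₀ ht₁
  rw [hΦ]
  exact ⟨ht₀, ht₁⟩

lemma exists_generic_pair [Infinite K] (E : Submodule K (End K M)) (W : Submodule K M)
    [FiniteDimensional K W] :
    ∃ l ∈ E, ∃ m ∈ E, (∀ l' ∈ E, finrank K (W.map l') ≤ finrank K (W.map l)) ∧
      (∀ m' ∈ E, finrank K ((W.map l).map m') ≤ finrank K ((W.map l).map m)) ∧
      ∀ l' ∈ E, finrank K ((W ⊓ LinearMap.ker m).map l') ≤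
        finrank K ((W ⊓ LinearMap.ker m).map l) := by
  let rank₁ (l : E) : ℕ := finrank K (W.map l.1)
  let rank₂ (m l : E) : ℕ := finrank K (W.map (m.1 ∘ₗ l.1))
  let rank₃ (m l : E) : ℕ := finrank K (W.map (m.1.prod l.1))
  obtain ⟨_, ⟨⟨m, l⟩, rfl⟩, hmax⟩ :=
    BddAbove.exists_isGreatest_of_nonempty (S := Set.range fun p : E × E ↦
      rank₁ p.2 + (rank₂ p.1 p.2 + rank₃ p.1 p.2)) ⟨3 * finrank K W, by
        rintro _ ⟨p, rfl⟩
        have h₁ : rank₁ p.2 ≤ finrank K W := Submodule.finrank_map_le _ _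
        have h₂ : rank₂ p.1 p.2 ≤ finrank K W := Submodule.finrank_map_le _ _
        have h₃ : rank₃ p.1 p.2 ≤ finrank K W := Submodule.finrank_map_le _ _
        dsimp only
        omega⟩ (Set.range_nonempty _)
  replace hmax (m' l' : E) : rank₁ l' + (rank₂ m' l' + rank₃ m' l') ≤
    rank₁ l + (rank₂ m l + rank₃ m l) := hmax ⟨(m', l'), rfl⟩
  have hr₁ : LineSemicontinuous K rank₁ := lineSemicontinuous_finrank_map W fun _ _ _ ↦ by simp
  have hr₂ : LineSemicontinuous K (rank₂ m) :=
    lineSemicontinuous_finrank_map W fun _ _ _ ↦ by ext; simp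
  have hr₂' : LineSemicontinuous K fun m' ↦ rank₂ m' l :=
    lineSemicontinuous_finrank_map W fun _ _ _ ↦ by ext; simp
  have hr₃ : LineSemicontinuous K (rank₃ m) :=
    lineSemicontinuous_finrank_map W fun _ _ _ ↦ by ext <;> simp
  have hr₃' : LineSemicontinuous K fun m' ↦ rank₃ m' l :=
    lineSemicontinuous_finrank_map W fun _ _ _ ↦ by ext <;> simp
  refine ⟨l, l.2, m, m.2, fun l' hl' ↦ ?_, fun m' hm' ↦ ?_, fun l' hl' ↦ ?_⟩
  · exact hr₁.le_of_add_le (hr₂.add hr₃) (hmax m) ⟨l', hl'⟩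
  · rw [← Submodule.map_comp, ← Submodule.map_comp]
    exact hr₂'.le_of_add_le hr₃' (fun y ↦ Nat.add_le_add_iff_left.mp (hmax y l)) ⟨m', hm'⟩
  · have : rank₃ m ⟨l', hl'⟩ ≤ rank₃ m l :=
      hr₃.le_of_add_le (hr₁.add hr₂) (fun y ↦ by have := hmax m y; omega) _
    simp only [rank₃, finrank_map_prod] at this
    omega

end GenericRank

section LoweringSystems

variable {K M : Type*} [Field K] [AddCommGroup M] [Module K M]
  {E E' : Submodule K (End K M)} {N : ℕ → Submodule K M}

/-- Commuting operators `E` which map degree `k + 1` to degree `k` and have no common kernel in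
positive degree; the model is the action of linear forms by contraction on the graded dual of a
polynomial ring. The submodules `N k` need not be independent. -/
structure LoweringSystem (E : Submodule K (End K M)) (N : ℕ → Submodule K M) : Prop where
  commute : ∀ l ∈ E, ∀ m ∈ E, Commute l m
  map_le : ∀ l ∈ E, ∀ k, (N (k + 1)).map l ≤ N k
  eq_zero : ∀ k, ∀ x ∈ N (k + 1), (∀ l ∈ E, l x = 0) → x = 0

/-- Macaulay's bound for subspaces of `N (d + 1)`: if all images of `W` under `E` have dimension at
most a number with Macaulay expansion `e` in base `d`, then `W` has dimension at most its growth. -/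
def GrowthBound (E : Submodule K (End K M)) (N : ℕ → Submodule K M) (d : ℕ) : Prop :=
  ∀ W : Submodule K M, FiniteDimensional K W → W ≤ N (d + 1) → ∀ e, Monotone e →
    (∀ l ∈ E, finrank K (W.map l) ≤ macaulaySum d e) → finrank K W ≤ macaulayGrowth d e

lemma map_inf_ker_le {l m : End K M} (h : Commute m l) (W : Submodule K M) :
    (W ⊓ LinearMap.ker m).map l ≤ W.map l ⊓ LinearMap.ker m := by
  rintro _ ⟨x, ⟨hxW, hxm⟩, rfl⟩
  have hcomm : m (l x) = l (m x) := LinearMap.congr_fun h.eq x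
  refine ⟨⟨x, hxW, rfl⟩, ?_⟩
  rw [SetLike.mem_coe, LinearMap.mem_ker, hcomm, LinearMap.mem_ker.mp hxm, map_zero]

lemma exists_span_singleton_sup_eq {m : M} {P : Submodule K M} [FiniteDimensional K P]
    (hm : m ∈ P) (hm₀ : m ≠ 0) :
    ∃ Q, K ∙ m ⊔ Q = P ∧ finrank K Q < finrank K P := by
  obtain ⟨Q, hdisj, hsup⟩ :=
    IsModularLattice.exists_disjoint_and_sup_eq
      ((Submodule.span_singleton_le_iff_mem m P).mpr hm)
  have : FiniteDimensional K Q := Submodule.finiteDimensional_of_le (hsup ▸ le_sup_right)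
  have hdim := Submodule.finrank_sup_add_finrank_inf_eq (K ∙ m) Q
  rw [hsup, hdisj.eq_bot, finrank_bot, finrank_span_singleton hm₀] at hdim
  exact ⟨Q, hsup, by omega⟩

namespace LoweringSystem

lemma restrict_ker (h : LoweringSystem E N) {m : End K M} (hE : K ∙ m ⊔ E' = E) :
    LoweringSystem E' fun k ↦ N k ⊓ LinearMap.ker m := by
  have hm : m ∈ E := hE ▸ Submodule.mem_sup_left (Submodule.mem_span_singleton_self m)
  have hE' : E' ≤ E := hE ▸ le_sup_right
  refine ⟨fun l hl l' hl' ↦ h.commute l (hE' hl) l' (hE' hl'), fun l hl k ↦ ?_, ?_⟩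
  · exact (map_inf_ker_le (h.commute m hm l (hE' hl)) _).trans
      (inf_le_inf_right _ (h.map_le l (hE' hl) k))
  · rintro k x ⟨hxN, hxm⟩ hx
    refine h.eq_zero k x hxN fun l hl ↦ ?_
    have hle : E ≤ LinearMap.ker (LinearMap.applyₗ (R := K) (M₂ := M) x) := by
      rw [← hE, sup_le_iff, Submodule.span_singleton_le_iff_mem]
      exact ⟨hxm, hx⟩
    exact hle hl

lemma eq_bot_of_map_eq_bot (h : LoweringSystem E N) {k : ℕ} {W : Submodule K M}
    (hW : W ≤ N (k + 1)) (hbot : ∀ l ∈ E, W.map l = ⊥) : W = ⊥ :=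
  (Submodule.eq_bot_iff W).mpr fun x hx ↦ h.eq_zero k x (hW hx) fun l hl ↦
    (Submodule.mem_bot K).mp (hbot l hl ▸ Submodule.mem_map_of_mem hx)

lemma map_ne_bot (h : LoweringSystem E N) {k : ℕ} {W : Submodule K M} [FiniteDimensional K W]
    (hW : W ≤ N (k + 1)) (hW₀ : W ≠ ⊥) {l : End K M}
    (hl : ∀ l' ∈ E, finrank K (W.map l') ≤ finrank K (W.map l)) : W.map l ≠ ⊥ := fun hbot ↦ by
  refine hW₀ (h.eq_bot_of_map_eq_bot hW fun l' hl' ↦ ?_)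
  have := hl l' hl'
  rwa [hbot, finrank_bot, Nat.le_zero, Submodule.finrank_eq_zero] at this

lemma growthBound_zero (h : LoweringSystem E N) : GrowthBound E N 0 := by
  intro W _ hW e _ hl
  have : W = ⊥ := h.eq_bot_of_map_eq_bot hW fun l hlE ↦ by
    simpa [macaulaySum] using hl l hlE
  rw [this, finrank_bot]
  exact Nat.zero_le _

lemma finrank_map_map_lt (h : LoweringSystem E N) {d : ℕ} {W : Submodule K M}
    [FiniteDimensional K W] (hW : W ≤ N (d + 2)) {l m : End K M} (hlE : l ∈ E) (hmE : m ∈ E)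
    (hl : ∀ l' ∈ E, finrank K (W.map l') ≤ finrank K (W.map l))
    (hlm : ∀ l' ∈ E, finrank K ((W ⊓ LinearMap.ker m).map l') ≤
      finrank K ((W ⊓ LinearMap.ker m).map l))
    (hE' : E' ≤ E) (hbound : GrowthBound E' (fun k ↦ N k ⊓ LinearMap.ker m) (d + 1))
    {e : ℕ → ℕ} (he : Monotone e) (hsum : finrank K (W.map l) = macaulaySum (d + 1) e)
    (hgrowth : macaulayGrowth (d + 1) e < finrank K W) :
    finrank K ((W.map l).map m) < macaulaySum d (fun i ↦ e (i + 1)) + min 1 (e 0) := by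
  have : FiniteDimensional K (W ⊓ LinearMap.ker m : Submodule K M) :=
    Submodule.finiteDimensional_of_le inf_le_left
  have hker : macaulayGrowth (d + 1) (fun i ↦ e i - 1) <
      finrank K (W ⊓ LinearMap.ker m : Submodule K M) := by
    have hdim := finrank_eq_finrank_map_add_finrank_inf_ker W m
    have hm := hl m hmE
    have := macaulayGrowth_eq_add (d + 1) e
    omega
  have hker_map : macaulaySum (d + 1) (fun i ↦ e i - 1) <
      finrank K ((W ⊓ LinearMap.ker m).map l) := by
    by_contra! hle
    exact hker.not_ge <| hbound _ inferInstance (inf_le_inf_right _ hW) _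
      (fun i j hij ↦ Nat.sub_le_sub_right (he hij) 1) fun l' hl' ↦ (hlm l' (hE' hl')).trans hle
  have : FiniteDimensional K (W.map l ⊓ LinearMap.ker m : Submodule K M) :=
    Submodule.finiteDimensional_of_le inf_le_left
  have hmono := Submodule.finrank_mono (map_inf_ker_le (h.commute m hmE l hlE) W)
  have hdim := finrank_eq_finrank_map_add_finrank_inf_ker (W.map l) m
  have := macaulaySum_succ_eq_add d e
  omega

lemma growthBound_succ [Infinite K] [FiniteDimensional K E] (h : LoweringSystem E N) {d : ℕ}
    (hd : GrowthBound E N d)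
    (hE : ∀ (E' : Submodule K (End K M)) (N' : ℕ → Submodule K M), finrank K E' < finrank K E →
      E' ≤ E → LoweringSystem E' N' → GrowthBound E' N' (d + 1)) :
    GrowthBound E N (d + 1) := by
  intro W _ hW e₀ he₀ hrank
  by_contra! hlt
  obtain ⟨l, hlE, m, hmE, hl, hm, hlm⟩ := exists_generic_pair E W
  have hrank_l := hrank l hlE
  obtain ⟨e, he, hsum, hgrowth⟩ := exists_macaulaySum_eq he₀ hrank_l
  have hWl : W.map l ≤ N (d + 1) := (Submodule.map_mono hW).trans (h.map_le l hlE (d + 1))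
  have hW₀ : W ≠ ⊥ := by
    rintro rfl
    simp at hlt
  have hm₀ : m ≠ 0 := by
    rintro rfl
    exact h.map_ne_bot hWl (h.map_ne_bot hW hW₀ hl) hm (Submodule.map_zero _)
  obtain ⟨E', hsup, hE'⟩ := exists_span_singleton_sup_eq hmE hm₀
  have hE'E : E' ≤ E := hsup ▸ le_sup_right
  have hmap_map := h.finrank_map_map_lt hW hlE hmE hl hlm hE'E
    (hE E' _ hE' hE'E (h.restrict_ker hsup)) he hsum.symm (by omega)
  have hshift : Monotone fun i ↦ e (i + 1) := fun i j hij ↦ he (Nat.succ_le_succ hij)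
  obtain ⟨e', he', hsum', hgrowth'⟩ := exists_macaulayGrowth_lt hshift hmap_map
  have := hd (W.map l) inferInstance hWl e' he' fun m' hm' ↦ (hm m' hm').trans hsum'
  have := macaulaySum_succ d e
  omega

theorem growthBound [Infinite K] [FiniteDimensional K E] (h : LoweringSystem E N) (d : ℕ) :
    GrowthBound E N d := by
  induction hn : finrank K E using Nat.strong_induction_on generalizing E N d with
  | _ n ih =>
    induction d with
    | zero => exact h.growthBound_zero
    | succ d hd =>
      refine h.growthBound_succ hd fun E' N' hlt hle h' ↦ ?_
      have : FiniteDimensional K E' := Submodule.finiteDimensional_of_le hle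
      exact ih _ (hn ▸ hlt) h' (d + 1) rfl

end LoweringSystem

end LoweringSystems

section Duality

variable {K A : Type*} [Field K] [CommRing A] [Algebra K A]

/-- The contraction action of `A` on functionals, `φ ↦ (x ↦ φ (a * x))`; on the graded dual of a
polynomial ring it is the action of Macaulay's inverse systems. -/
def contraction (K A : Type*) [Field K] [CommRing A] [Algebra K A] :
    A →ₗ[K] End K (Dual K A) :=
  Dual.transpose ∘ₗ LinearMap.mul K A

lemma contraction_apply_apply (a x : A) (φ : Dual K A) : contraction K A a φ x = φ (a * x) := rfl

lemma map_contraction_dualAnnihilator_le {P : Submodule K A} {a : A} (ha : a ∈ P)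
    (V : Submodule K A) :
    (P * V).dualAnnihilator.map (contraction K A a) ≤ V.dualAnnihilator := by
  rintro _ ⟨φ, hφ, rfl⟩
  exact (Submodule.mem_dualAnnihilator _).mpr fun f hf ↦
    (Submodule.mem_dualAnnihilator φ).mp hφ _ (Submodule.mul_mem_mul ha hf)

/-- The dual of the degree `k` part `𝒜 k`, encoded as the functionals on the whole ring that vanish
in all other degrees. -/
def degreeDual (𝒜 : ℕ → Submodule K A) (k : ℕ) : Submodule K (Dual K A) :=
  (⨆ j ≠ k, 𝒜 j).dualAnnihilator

lemma mem_degreeDual {𝒜 : ℕ → Submodule K A} {k : ℕ} {φ : Dual K A} :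
    φ ∈ degreeDual 𝒜 k ↔ ∀ j ≠ k, ∀ x ∈ 𝒜 j, φ x = 0 := by
  simp [degreeDual, Submodule.dualAnnihilator_iSup_eq, Submodule.mem_iInf,
    Submodule.mem_dualAnnihilator]

lemma loweringSystem_contraction (𝒜 : ℕ → Submodule K A) [GradedAlgebra 𝒜]
    (h𝒜 : ∀ k, 𝒜 (k + 1) ≤ 𝒜 1 * 𝒜 k) :
    LoweringSystem ((𝒜 1).map (contraction K A)) (degreeDual 𝒜) := by
  refine ⟨?_, ?_, ?_⟩
  · rintro _ ⟨a, -, rfl⟩ _ ⟨b, -, rfl⟩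
    ext φ x
    exact congr_arg φ (mul_left_comm b a x)
  · rintro _ ⟨a, ha, rfl⟩ k _ ⟨φ, hφ, rfl⟩
    exact mem_degreeDual.mpr fun j hj x hx ↦
      mem_degreeDual.mp hφ (1 + j) (by omega) _ (SetLike.mul_mem_graded ha hx)
  · intro k φ hφ hzero
    have hdeg (j : ℕ) : 𝒜 j ≤ LinearMap.ker φ := by
      obtain rfl | hj := eq_or_ne j (k + 1)
      · refine (h𝒜 k).trans (Submodule.mul_le.mpr fun a ha x _ ↦ ?_)
        exact LinearMap.congr_fun (hzero _ (Submodule.mem_map_of_mem ha)) x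
      · exact mem_degreeDual.mp hφ j hj
    have htop := (DirectSum.Decomposition.isInternal 𝒜).submodule_iSup_eq_top
    exact LinearMap.ker_eq_top.mp (top_le_iff.mp (htop ▸ iSup_le hdeg))

variable {M : Type*} [AddCommGroup M] [Module K M] {P Q U : Submodule K M}

lemma isCompl_iSup_ne {ι : Type*} [DecidableEq ι] (𝒜 : ι → Submodule K M)
    [DirectSum.Decomposition 𝒜] (k : ι) :
    IsCompl (𝒜 k) (⨆ j ≠ k, 𝒜 j) := by
  have h := DirectSum.Decomposition.isInternal 𝒜
  refine ⟨h.submodule_iSupIndep k, codisjoint_iff.mpr (top_le_iff.mp ?_)⟩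
  rw [← h.submodule_iSup_eq_top]
  exact iSup_le fun j ↦ by
    obtain rfl | hj := eq_or_ne j k
    · exact le_sup_left
    · exact le_sup_of_le_right (le_iSup₂_of_le j hj le_rfl)

lemma map_mkQ_sup_eq_top (h : IsCompl P Q) : P.map (Q ⊔ U).mkQ = ⊤ := by
  rw [Submodule.map_mkQ_eq_top, sup_right_comm, sup_comm Q, h.sup_eq_top, top_sup_eq]

lemma finiteDimensional_dualAnnihilator_sup (h : IsCompl P Q) [FiniteDimensional K P] :
    FiniteDimensional K (Q ⊔ U).dualAnnihilator :=
  Submodule.finite_dualAnnihilator_iff.mpr <| .of_surjective ((Q ⊔ U).mkQ.domRestrict P) (by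
    rw [← LinearMap.range_eq_top, LinearMap.range_domRestrict, map_mkQ_sup_eq_top h])

lemma finrank_dualAnnihilator_sup (h : IsCompl P Q) (hU : U ≤ P) [FiniteDimensional K P] :
    finrank K (Q ⊔ U).dualAnnihilator = finrank K P - finrank K U := by
  have hdim := finrank_eq_finrank_map_add_finrank_inf_ker P (Q ⊔ U).mkQ
  have hinf : P ⊓ (Q ⊔ U) = U := by
    rw [inf_comm, sup_comm, sup_inf_assoc_of_le Q hU, inf_comm, h.inf_eq_bot, sup_bot_eq]
  rw [map_mkQ_sup_eq_top h, finrank_top, Submodule.ker_mkQ, hinf] at hdim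
  rw [← (Q ⊔ U).dualQuotEquivDualAnnihilator.finrank_eq, Subspace.dual_finrank_eq]
  omega

end Duality

lemma span_setOf_eq_mul {K A : Type*} [CommSemiring K] [Semiring A] [Algebra K A]
    (P Q : Submodule K A) : Submodule.span K {g | ∃ l ∈ P, ∃ f ∈ Q, g = l * f} = P * Q := by
  rw [Submodule.mul_eq_span_mul_set]
  congr 1
  ext g
  simp [Set.mem_mul, eq_comm]

lemma homogeneousSubmodule_succ (σ R : Type*) [CommSemiring R] (k : ℕ) :
    homogeneousSubmodule σ R (k + 1) =
      homogeneousSubmodule σ R 1 * homogeneousSubmodule σ R k := by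
  rw [← homogeneousSubmodule_one_pow R (k + 1), ← homogeneousSubmodule_one_pow R k,
    pow_succ']

theorem macaulay_growth_bound_general {K A : Type*} [Field K] [Infinite K] [CommRing A]
    [Algebra K A] (𝒜 : ℕ → Submodule K A) [GradedAlgebra 𝒜]
    [∀ k, FiniteDimensional K (𝒜 k)] (h𝒜 : ∀ k, 𝒜 (k + 1) ≤ 𝒜 1 * 𝒜 k) {d : ℕ}
    {V : Submodule K A} (hV : V ≤ 𝒜 d) {ε : ℕ → ℤ}
    (hε : IsMacaulayExpansion (finrank K (𝒜 d) - finrank K V) d ε) :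
    finrank K (𝒜 (d + 1)) - finrank K (𝒜 1 * V : Submodule K A) ≤
      ∑ i ∈ Finset.Icc 1 d, (((i : ℤ) + ε i + 1).toNat).choose (i + 1) := by
  obtain ⟨e, he, hsum, hgrowth⟩ := hε.exists_monotone
  have hV' : 𝒜 1 * V ≤ 𝒜 (d + 1) := Submodule.mul_le.mpr fun a ha f hf ↦
    add_comm 1 d ▸ SetLike.mul_mem_graded ha (hV hf)
  rw [← hgrowth, ← finrank_dualAnnihilator_sup (isCompl_iSup_ne 𝒜 (d + 1)) hV']
  refine (loweringSystem_contraction 𝒜 h𝒜).growthBound d _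
    (finiteDimensional_dualAnnihilator_sup (isCompl_iSup_ne 𝒜 (d + 1)))
    (Submodule.dualAnnihilator_anti le_sup_left) e he ?_
  rintro _ ⟨a, ha, rfl⟩
  have := finiteDimensional_dualAnnihilator_sup (U := V) (isCompl_iSup_ne 𝒜 d)
  rw [hsum, ← finrank_dualAnnihilator_sup (isCompl_iSup_ne 𝒜 d) hV]
  refine Submodule.finrank_mono ?_
  rw [Submodule.dualAnnihilator_sup_eq, Submodule.dualAnnihilator_sup_eq]
  exact (Submodule.map_inf_le _).trans <| inf_le_inf
    ((loweringSystem_contraction 𝒜 h𝒜).map_le _ (Submodule.mem_map_of_mem ha) d)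
    (map_contraction_dualAnnihilator_le ha V)

/-- **Macaulay's theorem.** Let `V ⊆ S_d` be a linear subspace of the space of
degree-`d` homogeneous polynomials in `S = ℂ[x_0,…,x_n]`, of codimension `c`, with
Macaulay expansion `(ε_d,…,ε_1)` of `c` in base `d`.  Then the span of
`{ℓ·f : ℓ ∈ S_1, f ∈ V}` has codimension at most `c^⟨d⟩ = ∑ C(i+ε_i+1, i+1)` in `S_{d+1}`. -/
theorem macaulay_growth_bound (n d : ℕ) (hd : 1 ≤ d)
    (V : Submodule ℂ (MvPolynomial (Fin (n + 1)) ℂ))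
    (hV : V ≤ homogeneousSubmodule (Fin (n + 1)) ℂ d)
    (c : ℕ)
    (hc : c = Module.finrank ℂ (homogeneousSubmodule (Fin (n + 1)) ℂ d) -
      Module.finrank ℂ V)
    (ε : ℕ → ℤ) (hε : IsMacaulayExpansion c d ε) :
    Module.finrank ℂ (homogeneousSubmodule (Fin (n + 1)) ℂ (d + 1)) -
      Module.finrank ℂ (Submodule.span ℂ
        {g : MvPolynomial (Fin (n + 1)) ℂ |
          ∃ l ∈ homogeneousSubmodule (Fin (n + 1)) ℂ 1, ∃ f ∈ V, g = l * f}) ≤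
      ∑ i ∈ Finset.Icc 1 d, (((i : ℤ) + ε i + 1).toNat).choose (i + 1) := by
  subst hc
  have := MvPolynomial.gradedAlgebra (σ := Fin (n + 1)) (R := ℂ)
  have (k : ℕ) : FiniteDimensional ℂ (homogeneousSubmodule (Fin (n + 1)) ℂ k) :=
    Module.Finite.iff_fg.mpr (homogeneousSubmodule_fg _ _ k)
  rw [span_setOf_eq_mul]
  exact macaulay_growth_bound_general _ (fun k ↦ (homogeneousSubmodule_succ _ _ k).le) hV hε
end

section
/- (Gotzmann persistence) Let S = ℂ[x_0, …, x_n], let d ≥ 1, let V ⊆ S_d be a ℂ-linear subspace and let J ⊆ S be the ideal generated by V. Set c = h_J(d) and let (ε_d, …, ε_1) be the Macaulay expansion of c in base d. If h_J(d+1) = c^{⟨d⟩} = Σ_{i=1}^d C(i+ε_i+1, i+1), then for every k ≥ d one has h_J(k+1) = (h_J(k))^{⟨k⟩}; that is, if (δ_k, …, δ_1) is the Macaulay expansion of h_J(k) in base k, then h_J(k+1) = Σ_{i=1}^k C(i+δ_i+1, i+1). -/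
open MvPolynomial

/-- The Hilbert function of an ideal `I ⊆ ℂ[x_0,…,x_n]`:
`h_I(k) = dim S_k - dim (I ∩ S_k)`. -/
noncomputable def hilbertFn {n : ℕ} (I : Ideal (MvPolynomial (Fin (n + 1)) ℂ))
    (k : ℕ) : ℕ :=
  Module.finrank ℂ (homogeneousSubmodule (Fin (n + 1)) ℂ k) -
    Module.finrank ℂ
      (Submodule.restrictScalars ℂ I ⊓ homogeneousSubmodule (Fin (n + 1)) ℂ k :
        Submodule ℂ (MvPolynomial (Fin (n + 1)) ℂ))

/-!
Write `c_⟨d⟩` for Green's bound `∑ C(i+ε_i-1, i)`. Green's theorem says that a space `W` of forms of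
degree `d` and codimension `c` restricts to a general hyperplane `ℓ = 0` with codimension at most
`c_⟨d⟩`. If `ℓ₀` minimizes this codimension and `Q = W + (ℓ)` for a general `ℓ`, then
`Q : ℓ₀ ⊇ (W : ℓ₀) + (ℓ)`, so
`codim (W + (ℓ₀)) ≤ codim Q = codim (Q : ℓ₀) + codim (Q + (ℓ₀))` is bounded by induction, applied to
`W : ℓ₀` and to `W + (ℓ₀)`; the rest is arithmetic of binomial coefficients.

Suppose `V` attains Macaulay's bound and let `ℓ` be general. The exact sequence
`0 → S / (J : ℓ) → S / J → S / (J + (ℓ)) → 0` and the identities `c^⟨d⟩ = c + (c_⟨d⟩)^⟨d⟩` and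
`(c^⟨d⟩)_⟨d+1⟩ = (c_⟨d⟩)^⟨d⟩` force Green's bound to be attained by `V`, Macaulay's bound to be
attained by the restriction `V'` of `V` to `ℓ = 0`, and `(J : ℓ)_d = V`. By induction on the number
of variables the conclusion holds for `V'`, and it lifts to `V` once `(J : ℓ)_k = J_k` for all
`k ≥ d`. The latter spreads from degree `d` upwards because the ideal of `V'` has linear first
syzygies: a relation between multiples of its elements by the variables is a combination of Koszul
relations, which lift. Linearity of the syzygies is therefore carried along in the induction.
-/

namespace Gotzmann

open Module
open scoped Pointwise

section MacaulayExpansion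

/-- The sum of `f (k i) i` over `i < d`, where `c = ∑ i < d, (k i).choose (i + 1)` with
`k 0 < ⋯ < k (d - 1)` is the Macaulay expansion of `c` in base `d`, found greedily: `k (d - 1)` is
the largest `m` with `m.choose d ≤ c`. In base `0`, only `c = 0` has an expansion. -/
def cascadeSum (f : ℕ → ℕ → ℕ) : ℕ → ℕ → ℕ
  | 0, _ => 0
  | d + 1, c =>
    let m := Nat.findGreatest (fun m => m.choose (d + 1) ≤ c) (c + d)
    f m d + cascadeSum f d (c - m.choose (d + 1))

/-- Macaulay's bound `c^⟨d⟩` on `h(d + 1)` for a Hilbert function `h` with `h d = c`. -/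
def macaulayGrowth (d c : ℕ) : ℕ := cascadeSum (fun m i => (m + 1).choose (i + 2)) d c

/-- Green's bound `c_⟨d⟩` on the codimension of the restriction to a general hyperplane of a space
of forms of degree `d` and codimension `c`. -/
def greenBound (d c : ℕ) : ℕ := cascadeSum (fun m i => (m - 1).choose (i + 1)) d c

theorem le_choose_succ_add (m d : ℕ) : m ≤ m.choose (d + 1) + d := by
  induction m with
  | zero => exact Nat.zero_le _
  | succ m ih =>
    rcases le_or_gt d m with h | h
    · have := Nat.choose_pos h
      rw [Nat.choose_succ_succ']
      omega
    · omega

theorem cascadeSum_choose_add (f : ℕ → ℕ → ℕ) {d m r : ℕ} (hr : r < m.choose d) :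
    cascadeSum f (d + 1) (m.choose (d + 1) + r) = f m d + cascadeSum f d r := by
  have hm : Nat.findGreatest (fun i => i.choose (d + 1) ≤ m.choose (d + 1) + r)
      (m.choose (d + 1) + r + d) = m := by
    refine Nat.findGreatest_eq_iff.mpr
      ⟨by have := le_choose_succ_add m d; omega, fun _ => Nat.le_add_right _ _, fun i hi _ => ?_⟩
    have := Nat.choose_le_choose (d + 1) (Nat.succ_le_of_lt hi)
    rw [Nat.succ_eq_add_one, Nat.choose_succ_succ'] at this
    omega
  simp only [cascadeSum, hm, Nat.add_sub_cancel_left]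

theorem exists_eq_choose_add (d c : ℕ) : ∃ m r : ℕ, r < m.choose d ∧ c = m.choose (d + 1) + r := by
  induction c with
  | zero => exact ⟨d, 0, by simp⟩
  | succ c ih =>
    obtain ⟨m, r, hr, rfl⟩ := ih
    rcases Nat.lt_or_eq_of_le (Nat.succ_le_of_lt hr) with h | h
    · exact ⟨m, r + 1, h, rfl⟩
    · refine ⟨m + 1, 0, Nat.choose_pos ?_, ?_⟩
      · exact (Nat.le_of_not_lt fun hlt => by simp [Nat.choose_eq_zero_of_lt hlt] at hr).trans
          (Nat.le_succ m)
      · rw [Nat.choose_succ_succ']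
        omega

theorem macaulay_induction {P : ℕ → ℕ → Prop} (base : ∀ c, P 0 c) (zero : ∀ d, P (d + 1) 0)
    (step : ∀ d m r, d ≤ m → r < (m + 1).choose d → P d r →
      P (d + 1) ((m + 1).choose (d + 1) + r))
    (d c : ℕ) : P d c := by
  induction d generalizing c with
  | zero => exact base c
  | succ d ih =>
    obtain ⟨m, r, hr, rfl⟩ := exists_eq_choose_add d c
    rcases le_or_gt m d with hm | hm
    · have hr1 := hr.trans_le (Nat.choose_le_choose d hm)
      rw [Nat.choose_self, Nat.lt_one_iff] at hr1
      rw [Nat.choose_eq_zero_of_lt (Nat.lt_succ_of_le hm), hr1]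
      exact zero d
    · obtain ⟨m, rfl⟩ := Nat.exists_eq_add_of_lt hm
      exact step d (d + m) r (Nat.le_add_right d m) hr (ih r)

theorem macaulayGrowth_choose_add {d m r : ℕ} (hr : r < m.choose d) :
    macaulayGrowth (d + 1) (m.choose (d + 1) + r) =
      (m + 1).choose (d + 2) + macaulayGrowth d r :=
  cascadeSum_choose_add _ hr

theorem greenBound_choose_add {d m r : ℕ} (hr : r < (m + 1).choose d) :
    greenBound (d + 1) ((m + 1).choose (d + 1) + r) = m.choose (d + 1) + greenBound d r :=
  cascadeSum_choose_add _ hr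

theorem cascadeSum_zero {f : ℕ → ℕ → ℕ} (hf : ∀ d, f d d = 0) (d : ℕ) : cascadeSum f d 0 = 0 := by
  induction d with
  | zero => rfl
  | succ d ih =>
    simpa [hf, ih] using cascadeSum_choose_add f (m := d) (r := 0) (Nat.choose_pos le_rfl)

theorem macaulayGrowth_zero (d : ℕ) : macaulayGrowth d 0 = 0 :=
  cascadeSum_zero (fun d => Nat.choose_succ_self (d + 1)) d

theorem greenBound_zero (d : ℕ) : greenBound d 0 = 0 :=
  cascadeSum_zero (f := fun m i => (m - 1).choose (i + 1))
    (fun d => Nat.choose_eq_zero_of_lt (Nat.lt_succ_of_le d.pred_le)) d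

theorem lt_of_choose_add_lt_choose {d l m r : ℕ} (h : l.choose d + r < m.choose d) : l < m :=
  lt_of_not_ge fun hml => by have := Nat.choose_le_choose d hml; omega

theorem greenBound_lt_choose {d m c : ℕ} (hd : d ≤ m) (hc : c < (m + 1).choose d) :
    greenBound d c < m.choose d := by
  induction d, c using macaulay_induction generalizing m with
  | base => simp [greenBound, cascadeSum]
  | zero d => exact (greenBound_zero (d + 1)).trans_lt (Nat.choose_pos hd)
  | step d l r hdl hr ih =>
    have hlm : l + 1 ≤ m := Nat.lt_succ_iff.mp (lt_of_choose_add_lt_choose hc)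
    calc greenBound (d + 1) ((l + 1).choose (d + 1) + r)
        = l.choose (d + 1) + greenBound d r := greenBound_choose_add hr
      _ < l.choose (d + 1) + l.choose d := Nat.add_lt_add_left (ih hdl hr) _
      _ = (l + 1).choose (d + 1) := by rw [Nat.choose_succ_succ', add_comm]
      _ ≤ m.choose (d + 1) := Nat.choose_le_choose _ hlm

theorem macaulayGrowth_add_one_lt_choose {d m c : ℕ} (hd : d ≤ m) (hc : c < (m + 1).choose d) :
    macaulayGrowth d c + 1 < (m + 2).choose (d + 1) := by
  induction d, c using macaulay_induction generalizing m with
  | base => simp [macaulayGrowth, cascadeSum]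
  | zero d =>
    have := le_choose_succ_add (m + 2) (d + 1)
    rw [macaulayGrowth_zero]
    omega
  | step d l r hdl hr ih =>
    have hlm : l + 3 ≤ m + 2 := Nat.succ_le_succ (lt_of_choose_add_lt_choose hc)
    calc macaulayGrowth (d + 1) ((l + 1).choose (d + 1) + r) + 1
        = (l + 2).choose (d + 2) + (macaulayGrowth d r + 1) := by
          rw [macaulayGrowth_choose_add hr, add_assoc]
      _ < (l + 2).choose (d + 2) + (l + 2).choose (d + 1) := Nat.add_lt_add_left (ih hdl hr) _
      _ = (l + 3).choose (d + 2) := by rw [Nat.choose_succ_succ' (l + 2), add_comm]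
      _ ≤ (m + 2).choose (d + 2) := Nat.choose_le_choose _ hlm

theorem greenBound_succ_choose {d m : ℕ} (h : d ≤ m) :
    greenBound (d + 1) ((m + 1).choose (d + 1)) = m.choose (d + 1) := by
  simpa [greenBound_zero] using greenBound_choose_add (r := 0) (Nat.choose_pos (h.trans m.le_succ))

theorem greenBound_one (d : ℕ) : greenBound d 1 = 0 := by
  cases d with
  | zero => rfl
  | succ d => simpa using greenBound_succ_choose (le_refl d)

theorem greenBound_le_succ_and_succ_le (d c : ℕ) :
    greenBound d c ≤ greenBound d (c + 1) ∧ greenBound d (c + 1) ≤ greenBound d c + 1 := by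
  induction d, c using macaulay_induction with
  | base => simp [greenBound, cascadeSum]
  | zero d => simp [greenBound_zero, greenBound_one]
  | step d m r hdm hr ih =>
    rw [greenBound_choose_add hr]
    rcases Nat.lt_or_eq_of_le (Nat.succ_le_of_lt hr) with hr1 | hr1
    · rw [add_assoc, greenBound_choose_add hr1]
      exact ⟨Nat.add_le_add_left ih.1 _, Nat.add_le_add_left ih.2 _⟩
    · have hcarry : (m + 1).choose (d + 1) + r + 1 = (m + 2).choose (d + 1) := by
        rw [Nat.choose_succ_succ' (m + 1)]
        omega
      have hle := greenBound_lt_choose hdm hr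
      have hge : m.choose d ≤ greenBound d r + 1 := by
        cases d with
        | zero => simp
        | succ d =>
          rw [← greenBound_succ_choose ((Nat.le_succ d).trans hdm), ← hr1]
          exact ih.2
      rw [hcarry, greenBound_succ_choose (hdm.trans m.le_succ), Nat.choose_succ_succ']
      omega

theorem greenBound_monotone (d : ℕ) : Monotone (greenBound d) :=
  monotone_nat_of_le_succ fun c => (greenBound_le_succ_and_succ_le d c).1

theorem add_greenBound_le_add_greenBound {a b : ℕ} (d : ℕ) (h : a ≤ b) :
    a + greenBound d b ≤ b + greenBound d a := by
  induction b, h using Nat.le_induction with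
  | base => rfl
  | succ b _ ih =>
    have := (greenBound_le_succ_and_succ_le d b).2
    omega

theorem greenBound_macaulayGrowth_add {e : ℕ} (he : e ≤ 1) (d c : ℕ) :
    greenBound (d + 1) (macaulayGrowth d c + e) = macaulayGrowth d (greenBound d c) := by
  induction d, c using macaulay_induction with
  | base =>
    interval_cases e
    · exact greenBound_zero 1
    · exact greenBound_one 1
  | zero d => interval_cases e <;> simp [macaulayGrowth_zero, greenBound_zero, greenBound_one]
  | step d m r hdm hr ih =>
    have hlt : macaulayGrowth d r + e < (m + 2).choose (d + 1) := by
      have := macaulayGrowth_add_one_lt_choose hdm hr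
      omega
    rw [macaulayGrowth_choose_add hr, add_assoc (Nat.choose _ _), greenBound_choose_add hlt,
      greenBound_choose_add hr, macaulayGrowth_choose_add (greenBound_lt_choose hdm hr), ih]

theorem greenBound_macaulayGrowth (d c : ℕ) :
    greenBound (d + 1) (macaulayGrowth d c) = macaulayGrowth d (greenBound d c) :=
  greenBound_macaulayGrowth_add zero_le_one d c

theorem macaulayGrowth_eq_add {d c : ℕ} (h : d = 0 → c = 0) :
    macaulayGrowth d c = c + macaulayGrowth d (greenBound d c) := by
  induction d, c using macaulay_induction with
  | base => exact (h rfl).symm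
  | zero d => simp [macaulayGrowth_zero, greenBound_zero]
  | step d m r hdm hr ih =>
    have hlow := ih fun hd => by simpa [hd] using hr
    have hpascal : (m + 2).choose (d + 2) = (m + 1).choose (d + 1) + (m + 1).choose (d + 2) :=
      Nat.choose_succ_succ' _ _
    rw [greenBound_choose_add hr, macaulayGrowth_choose_add hr,
      macaulayGrowth_choose_add (greenBound_lt_choose hdm hr), hpascal, add_add_add_comm,
      ← hlow]

theorem le_macaulayGrowth_of_le_add_greenBound {d a c : ℕ} (ha : d = 0 → a = 0)
    (h : c ≤ a + greenBound (d + 1) c) : c ≤ macaulayGrowth d a := by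
  by_contra! hlt
  have hmono := add_greenBound_le_add_greenBound (d + 1) (Nat.succ_le_of_lt hlt)
  rw [Nat.succ_eq_add_one, greenBound_macaulayGrowth_add le_rfl] at hmono
  have := macaulayGrowth_eq_add ha
  omega

theorem le_greenBound_of_le_add {d a p : ℕ} (hp : d = 0 → p = 0)
    (h : a ≤ greenBound d p + greenBound (d + 1) a) : a ≤ greenBound (d + 1) (a + p) := by
  have hgrowth := macaulayGrowth_eq_add hp
  have hgreen := greenBound_macaulayGrowth d p
  rcases le_total (a + p) (macaulayGrowth d p) with hle | hle
  · have := add_greenBound_le_add_greenBound (d + 1) hle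
    omega
  · calc a ≤ macaulayGrowth d (greenBound d p) :=
          le_macaulayGrowth_of_le_add_greenBound (fun hd => by simp [hp hd, greenBound_zero]) h
      _ = greenBound (d + 1) (macaulayGrowth d p) := hgreen.symm
      _ ≤ greenBound (d + 1) (a + p) := greenBound_monotone _ hle

theorem sum_choose_lt_choose {d : ℕ} {k : ℕ → ℕ} (hk : StrictMonoOn k (Set.Iic d)) :
    ∑ i ∈ Finset.range d, (k i).choose (i + 1) < (k d).choose d := by
  induction d with
  | zero => simp
  | succ d ih =>
    have hsum := ih (hk.mono (Set.Iic_subset_Iic.mpr d.le_succ))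
    have hlt : k d < k (d + 1) := hk d.le_succ Set.self_mem_Iic d.lt_succ_self
    calc ∑ i ∈ Finset.range (d + 1), (k i).choose (i + 1)
        < (k d).choose d + (k d).choose (d + 1) := by
          rw [Finset.sum_range_succ]
          exact Nat.add_lt_add_right hsum _
      _ = (k d + 1).choose (d + 1) := (Nat.choose_succ_succ' _ _).symm
      _ ≤ (k (d + 1)).choose (d + 1) := Nat.choose_le_choose _ hlt

theorem cascadeSum_sum_choose (f : ℕ → ℕ → ℕ) {d : ℕ} {k : ℕ → ℕ}
    (hk : StrictMonoOn k (Set.Iio d)) :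
    cascadeSum f d (∑ i ∈ Finset.range d, (k i).choose (i + 1)) =
      ∑ i ∈ Finset.range d, f (k i) i := by
  induction d with
  | zero => rfl
  | succ d ih =>
    have hlt := sum_choose_lt_choose (hk.mono fun i (hi : i ≤ d) => Nat.lt_succ_of_le hi)
    have hlow := ih (hk.mono (Set.Iio_subset_Iio d.le_succ))
    rw [Finset.sum_range_succ_comm, cascadeSum_choose_add f hlt, hlow, Finset.sum_range_succ_comm]

end MacaulayExpansion

section Generic

variable {σ K : Type*} [Field K]

/-- The filter generated by the nonempty principal Zariski-open subsets of the affine space `K^σ`: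
`∀ᶠ b in generic σ K, P b` says that `P` holds at a general point `b`. -/
def generic (σ K : Type*) [Field K] : Filter (σ → K) where
  sets := {s | ∃ p : MvPolynomial σ K, p ≠ 0 ∧ ∀ b, eval b p ≠ 0 → b ∈ s}
  univ_sets := ⟨1, one_ne_zero, fun _ _ => Set.mem_univ _⟩
  sets_of_superset := fun ⟨p, hp, hps⟩ hst => ⟨p, hp, fun b hb => hst (hps b hb)⟩
  inter_sets := fun ⟨p, hp, hps⟩ ⟨q, hq, hqt⟩ => ⟨p * q, mul_ne_zero hp hq, fun b hb => by
    rw [map_mul] at hb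
    exact ⟨hps b (left_ne_zero_of_mul hb), hqt b (right_ne_zero_of_mul hb)⟩⟩

theorem eventually_generic_iff {P : (σ → K) → Prop} : (∀ᶠ b in generic σ K, P b) ↔
    ∃ p : MvPolynomial σ K, p ≠ 0 ∧ ∀ b, eval b p ≠ 0 → P b :=
  Iff.rfl

instance [Infinite K] : (generic σ K).NeBot := by
  refine ⟨fun h => ?_⟩
  obtain ⟨p, hp, hempty⟩ := Filter.empty_mem_iff_bot.mpr h
  exact hp (MvPolynomial.funext fun b => by simpa using hempty b)

theorem eventually_generic_apply_ne_zero (i : σ) : ∀ᶠ b in generic σ K, b i ≠ 0 :=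
  eventually_generic_iff.mpr ⟨X i, X_ne_zero i, fun b hb => by simpa using hb⟩

theorem exists_eval_eq_add_apply [Finite σ] (a : K) (f : (σ → K) →ₗ[K] K) :
    ∃ p : MvPolynomial σ K, ∀ b, eval b p = a + f b := by
  classical
  have := Fintype.ofFinite σ
  refine ⟨C a + ∑ i, C (f fun j => if i = j then 1 else 0) * X i, fun b => ?_⟩
  rw [f.pi_apply_eq_sum_univ b]
  simp [mul_comm]

theorem eventually_generic_linearIndependent {ι E : Type*} [Finite ι] [Finite σ] [AddCommGroup E]
    [Module K E] (w : ι → E) (u : ι → (σ → K) →ₗ[K] E) {b₀ : σ → K}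
    (h₀ : LinearIndependent K fun j => w j + u j b₀) :
    ∀ᶠ b in generic σ K, LinearIndependent K fun j => w j + u j b := by
  classical
  have := Fintype.ofFinite ι
  -- Functionals dual to the vectors at `b₀` turn independence into a nonvanishing determinant.
  obtain ⟨g, hg⟩ := LinearMap.exists_leftInverse_of_injective _
    (LinearMap.ker_eq_bot.mpr h₀.fintypeLinearCombination_injective)
  have hdual (j : ι) : g (w j + u j b₀) = Pi.single j 1 := by
    simpa [Fintype.linearCombination_apply_single] using LinearMap.congr_fun hg (Pi.single j 1)
  choose M hM using fun i j =>
    exists_eval_eq_add_apply (g (w j) i) (LinearMap.proj i ∘ₗ g ∘ₗ u j)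
  have hdet (b : σ → K) : eval b (Matrix.of M).det =
      (Matrix.of fun i j => g (w j + u j b) i).det := by
    rw [RingHom.map_det]
    congr 1
    ext i j
    simp [hM]
  refine eventually_generic_iff.mpr ⟨(Matrix.of M).det, fun hzero => ?_, fun b hb => ?_⟩
  · have hdet₀ := hdet b₀
    have hone : (Matrix.of fun i j => g (w j + u j b₀) i : Matrix ι ι K) = 1 := by
      ext i j
      rw [Matrix.of_apply, hdual, Matrix.one_apply, Pi.single_apply]
    rw [hone, hzero, map_zero, Matrix.det_one] at hdet₀
    exact zero_ne_one hdet₀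
  · rw [hdet] at hb
    exact .of_comp g (Matrix.linearIndependent_cols_of_det_ne_zero hb)

end Generic

local notation "𝒮" => homogeneousSubmodule

section Forms

variable {σ K : Type*} [Field K]

instance finiteDimensional_homogeneousSubmodule [Finite σ] (k : ℕ) :
    FiniteDimensional K (𝒮 σ K k) :=
  Module.Finite.iff_fg.mpr (homogeneousSubmodule_fg σ K k)

theorem homogeneousSubmodule_one_mul (k : ℕ) : 𝒮 σ K 1 * 𝒮 σ K k = 𝒮 σ K (k + 1) := by
  rw [← homogeneousSubmodule_one_pow K k, ← homogeneousSubmodule_one_pow K (k + 1), pow_succ']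

theorem homogeneousSubmodule_one_mul_le {k : ℕ} {W : Submodule K (MvPolynomial σ K)}
    (hW : W ≤ 𝒮 σ K k) : 𝒮 σ K 1 * W ≤ 𝒮 σ K (k + 1) :=
  (mul_le_mul_right hW _).trans_eq (homogeneousSubmodule_one_mul k)

theorem smul_homogeneousSubmodule_le {ℓ : MvPolynomial σ K} (hℓ : ℓ ∈ 𝒮 σ K 1) (k : ℕ) :
    ℓ • 𝒮 σ K k ≤ 𝒮 σ K (k + 1) := by
  rintro _ ⟨f, hf, rfl⟩
  exact (homogeneousSubmodule_one_mul k).le (Submodule.mul_mem_mul hℓ hf)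

/-- The codimension of `W`, a space of forms of degree `k`, in the space of all such forms. -/
noncomputable def codim (k : ℕ) (W : Submodule K (MvPolynomial σ K)) : ℕ :=
  finrank K (𝒮 σ K k) - finrank K W

/-- The degree-`k` part of the colon `Q : ℓ`, for a form `ℓ` and a space `Q` of forms. -/
noncomputable def colon (k : ℕ) (ℓ : MvPolynomial σ K) (Q : Submodule K (MvPolynomial σ K)) :
    Submodule K (MvPolynomial σ K) :=
  Q.comap (LinearMap.mulLeft K ℓ) ⊓ 𝒮 σ K k

variable {k : ℕ} {ℓ : MvPolynomial σ K} {U W Q : Submodule K (MvPolynomial σ K)}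

theorem mem_colon {f : MvPolynomial σ K} : f ∈ colon k ℓ Q ↔ ℓ * f ∈ Q ∧ f ∈ 𝒮 σ K k :=
  Iff.rfl

theorem colon_le : colon k ℓ Q ≤ 𝒮 σ K k :=
  inf_le_right

theorem finrank_smul (hℓ : ℓ ≠ 0) (W : Submodule K (MvPolynomial σ K)) :
    finrank K ↥(ℓ • W) = finrank K W :=
  (Submodule.equivMapOfInjective _ (mul_right_injective₀ hℓ) W).finrank_eq.symm

theorem inf_smul_homogeneousSubmodule : Q ⊓ ℓ • 𝒮 σ K k = ℓ • colon k ℓ Q := by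
  ext f
  constructor
  · rintro ⟨hQ, g, hg, rfl⟩
    exact ⟨g, ⟨hQ, hg⟩, rfl⟩
  · rintro ⟨g, ⟨hQ, hg⟩, rfl⟩
    exact ⟨hQ, g, hg, rfl⟩

variable [Finite σ]

theorem codim_add_finrank (hW : W ≤ 𝒮 σ K k) :
    codim k W + finrank K W = finrank K (𝒮 σ K k) :=
  Nat.sub_add_cancel (Submodule.finrank_mono hW)

theorem codim_anti (hUW : U ≤ W) (hW : W ≤ 𝒮 σ K k) : codim k W ≤ codim k U := by
  have := Submodule.finiteDimensional_of_le hW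
  exact Nat.sub_le_sub_left (Submodule.finrank_mono hUW) _

theorem eq_of_le_of_codim_le (hUW : U ≤ W) (hW : W ≤ 𝒮 σ K k) (h : codim k U ≤ codim k W) :
    U = W := by
  have := Submodule.finiteDimensional_of_le hW
  have := codim_add_finrank hW
  have := codim_add_finrank (hUW.trans hW)
  exact Submodule.eq_of_le_of_finrank_le hUW (by omega)

-- Multiplication by `ℓ` gives an exact sequence
-- `0 → S_k / (Q : ℓ) → S_{k+1} / Q → S_{k+1} / (Q + ℓ S_k) → 0`.
theorem codim_eq_codim_colon_add (hℓ : ℓ ∈ 𝒮 σ K 1) (hne : ℓ ≠ 0) (hQ : Q ≤ 𝒮 σ K (k + 1)) :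
    codim (k + 1) Q = codim k (colon k ℓ Q) + codim (k + 1) (Q ⊔ ℓ • 𝒮 σ K k) := by
  have hle := smul_homogeneousSubmodule_le hℓ k
  have := Submodule.finiteDimensional_of_le hQ
  have := Submodule.finiteDimensional_of_le hle
  have hdim := Submodule.finrank_sup_add_finrank_inf_eq Q (ℓ • 𝒮 σ K k)
  rw [inf_smul_homogeneousSubmodule, finrank_smul hne, finrank_smul hne] at hdim
  have := codim_add_finrank hQ
  have := codim_add_finrank (colon_le (k := k) (ℓ := ℓ) (Q := Q))
  have := codim_add_finrank (sup_le hQ hle)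
  omega

theorem codim_le_codim_add (hℓ : ℓ ∈ 𝒮 σ K 1) (hW : W ≤ 𝒮 σ K k) (hQ : Q ≤ 𝒮 σ K (k + 1))
    (hWQ : ℓ • W ≤ Q) : codim (k + 1) Q ≤ codim k W + codim (k + 1) (Q ⊔ ℓ • 𝒮 σ K k) := by
  rcases eq_or_ne ℓ 0 with rfl | hne
  · simp
  rw [codim_eq_codim_colon_add hℓ hne hQ]
  have hcolon : W ≤ colon k ℓ Q := fun f hf =>
    mem_colon.mpr ⟨hWQ (Submodule.smul_mem_pointwise_smul f ℓ W hf), hW hf⟩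
  exact Nat.add_le_add_right (codim_anti hcolon colon_le) _

end Forms

section LinearForm

variable {σ K : Type*} [Field K] [Fintype σ]

/-- The linear form `∑ i, b i * x_i`. -/
noncomputable def linearForm : (σ → K) →ₗ[K] MvPolynomial σ K :=
  Fintype.linearCombination K X

theorem range_linearForm : LinearMap.range (linearForm (σ := σ) (K := K)) = 𝒮 σ K 1 := by
  rw [linearForm, Fintype.range_linearCombination, homogeneousSubmodule_one_eq_span_X]

theorem linearForm_mem (b : σ → K) : linearForm b ∈ 𝒮 σ K 1 :=
  range_linearForm.le ⟨b, rfl⟩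

variable {k : ℕ} {W : Submodule K (MvPolynomial σ K)}

theorem homogeneousSubmodule_le_of_forall_smul_le
    (h : ∀ b : σ → K, linearForm b • 𝒮 σ K k ≤ W) :
    𝒮 σ K (k + 1) ≤ W := by
  rw [← homogeneousSubmodule_one_mul, Submodule.mul_le, ← range_linearForm]
  rintro _ ⟨b, rfl⟩ f hf
  exact h b (Submodule.smul_mem_pointwise_smul f _ _ hf)

theorem eventually_codim_sup_le (hW : W ≤ 𝒮 σ K (k + 1)) (b₀ : σ → K) :
    ∀ᶠ b in generic σ K, codim (k + 1) (W ⊔ linearForm b • 𝒮 σ K k) ≤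
      codim (k + 1) (W ⊔ linearForm b₀ • 𝒮 σ K k) := by
  have hle (b : σ → K) : W ⊔ linearForm b • 𝒮 σ K k ≤ 𝒮 σ K (k + 1) :=
    sup_le hW (smul_homogeneousSubmodule_le (linearForm_mem b) k)
  have (b : σ → K) := Submodule.finiteDimensional_of_le (hle b)
  let B := Module.finBasis K ↥(W ⊔ linearForm b₀ • 𝒮 σ K k)
  have hB (j) : ∃ w ∈ W, ∃ f ∈ 𝒮 σ K k, w + linearForm b₀ * f = B j := by
    obtain ⟨w, hw, _, ⟨f, hf, rfl⟩, hsum⟩ := Submodule.mem_sup.mp (B j).2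
    exact ⟨w, hw, f, hf, hsum⟩
  choose w hw f hf hwf using hB
  have h₀ : LinearIndependent K fun j => w j + (LinearMap.mulRight K (f j) ∘ₗ linearForm) b₀ := by
    simpa [hwf, Function.comp_def] using
      B.linearIndependent.map' (Submodule.subtype _) (Submodule.ker_subtype _)
  filter_upwards [eventually_generic_linearIndependent w _ h₀] with b hb
  refine Nat.sub_le_sub_left ?_ _
  rw [← Fintype.card_fin (finrank K ↥(W ⊔ linearForm b₀ • 𝒮 σ K k)), ← finrank_span_eq_card hb]
  refine Submodule.finrank_mono (Submodule.span_le.mpr ?_)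
  rintro _ ⟨j, rfl⟩
  exact Submodule.add_mem_sup (hw j) (Submodule.smul_mem_pointwise_smul (f j) _ _ (hf j))

theorem eventually_codim_sup_le_of_minimal {m : ℕ} (hW : W ≤ 𝒮 σ K (k + 1))
    (h : ∀ b₀ : σ → K, linearForm b₀ ≠ 0 →
      codim (k + 1) (W ⊔ linearForm b₀ • 𝒮 σ K k) < codim (k + 1) W →
      (∀ b : σ → K, codim (k + 1) (W ⊔ linearForm b₀ • 𝒮 σ K k) ≤
        codim (k + 1) (W ⊔ linearForm b • 𝒮 σ K k)) →
      codim (k + 1) (W ⊔ linearForm b₀ • 𝒮 σ K k) ≤ m) :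
    ∀ᶠ b in generic σ K, codim (k + 1) (W ⊔ linearForm b • 𝒮 σ K k) ≤ m := by
  have hle (b : σ → K) : W ⊔ linearForm b • 𝒮 σ K k ≤ 𝒮 σ K (k + 1) :=
    sup_le hW (smul_homogeneousSubmodule_le (linearForm_mem b) k)
  rcases Nat.eq_zero_or_pos (codim (k + 1) W) with hzero | hpos
  · exact .of_forall fun b =>
      ((codim_anti le_sup_left (hle b)).trans_eq hzero).trans (Nat.zero_le m)
  let F (b : σ → K) := codim (k + 1) (W ⊔ linearForm b • 𝒮 σ K k)
  have hmin (b : σ → K) : F (Function.argmin F) ≤ F b := Function.argmin_le F b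
  have hlt : F (Function.argmin F) < codim (k + 1) W := by
    by_contra! hge
    have hsmul (b : σ → K) : linearForm b • 𝒮 σ K k ≤ W := by
      rw [eq_of_le_of_codim_le le_sup_left (hle b) (hge.trans (hmin b))]
      exact le_sup_right
    rw [le_antisymm hW (homogeneousSubmodule_le_of_forall_smul_le hsmul), codim,
      Nat.sub_self] at hpos
    exact hpos.false
  have hne : linearForm (Function.argmin F) ≠ 0 := fun hzero => by simp [F, hzero] at hlt
  filter_upwards [eventually_codim_sup_le hW (Function.argmin F)] with b hb
  exact hb.trans (h _ hne hlt hmin)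

end LinearForm

section Green

theorem greenBound_one_left (c : ℕ) : greenBound 1 c = c - 1 := by
  cases c with
  | zero => exact greenBound_zero 1
  | succ c => simpa [greenBound_zero] using greenBound_choose_add (d := 0) (m := c) (r := 0)

variable {σ K : Type*} [Field K] [Fintype σ] [Infinite K]

theorem codim_sup_le_greenBound_of_minimal {k : ℕ} {W : Submodule K (MvPolynomial σ K)}
    {b₀ : σ → K} (hW : W ≤ 𝒮 σ K (k + 2)) (hne : linearForm b₀ ≠ 0)
    (hmin : ∀ b : σ → K, codim (k + 2) (W ⊔ linearForm b₀ • 𝒮 σ K (k + 1)) ≤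
      codim (k + 2) (W ⊔ linearForm b • 𝒮 σ K (k + 1)))
    (hcolon : ∀ᶠ b in generic σ K,
      codim (k + 1) (colon (k + 1) (linearForm b₀) W ⊔ linearForm b • 𝒮 σ K k) ≤
        greenBound (k + 1) (codim (k + 1) (colon (k + 1) (linearForm b₀) W)))
    (hsection : ∀ᶠ b in generic σ K,
      codim (k + 2) (W ⊔ linearForm b₀ • 𝒮 σ K (k + 1) ⊔ linearForm b • 𝒮 σ K (k + 1)) ≤
        greenBound (k + 2) (codim (k + 2) (W ⊔ linearForm b₀ • 𝒮 σ K (k + 1)))) :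
    codim (k + 2) (W ⊔ linearForm b₀ • 𝒮 σ K (k + 1)) ≤ greenBound (k + 2) (codim (k + 2) W) := by
  obtain ⟨b, hcolon, hsection⟩ := (hcolon.and hsection).exists
  set ℓ₀ : MvPolynomial σ K := linearForm b₀
  set ℓ : MvPolynomial σ K := linearForm b
  have hℓ₀ : ℓ₀ ∈ 𝒮 σ K 1 := linearForm_mem b₀
  have hℓ : ℓ ∈ 𝒮 σ K 1 := linearForm_mem b
  set Q := W ⊔ ℓ • 𝒮 σ K (k + 1) with hQ
  have hcolon_le : colon (k + 1) ℓ₀ W ⊔ ℓ • 𝒮 σ K k ≤ colon (k + 1) ℓ₀ Q := by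
    refine sup_le (fun f hf => ⟨Submodule.mem_sup_left hf.1, hf.2⟩) ?_
    rintro _ ⟨f, hf, rfl⟩
    refine mem_colon.mpr ⟨Submodule.mem_sup_right ⟨ℓ₀ * f, ?_, mul_left_comm ℓ ℓ₀ f⟩,
      smul_homogeneousSubmodule_le hℓ k ⟨f, hf, rfl⟩⟩
    exact smul_homogeneousSubmodule_le hℓ₀ k ⟨f, hf, rfl⟩
  have hexact := codim_eq_codim_colon_add hℓ₀ hne hW
  have hbound : codim (k + 2) (W ⊔ ℓ₀ • 𝒮 σ K (k + 1)) ≤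
      greenBound (k + 1) (codim (k + 1) (colon (k + 1) ℓ₀ W)) +
        greenBound (k + 2) (codim (k + 2) (W ⊔ ℓ₀ • 𝒮 σ K (k + 1))) :=
    calc codim (k + 2) (W ⊔ ℓ₀ • 𝒮 σ K (k + 1)) ≤ codim (k + 2) Q := hmin b
      _ = codim (k + 1) (colon (k + 1) ℓ₀ Q) + codim (k + 2) (Q ⊔ ℓ₀ • 𝒮 σ K (k + 1)) :=
          codim_eq_codim_colon_add hℓ₀ hne (sup_le hW (smul_homogeneousSubmodule_le hℓ _))
      _ ≤ _ := by
          refine Nat.add_le_add ((codim_anti hcolon_le colon_le).trans hcolon) ?_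
          rwa [hQ, sup_right_comm]
  rw [hexact, add_comm (codim (k + 1) _)]
  exact le_greenBound_of_le_add (fun h => absurd h k.succ_ne_zero) hbound

theorem eventually_codim_sup_le_greenBound (k : ℕ) {W : Submodule K (MvPolynomial σ K)}
    (hW : W ≤ 𝒮 σ K (k + 1)) :
    ∀ᶠ b in generic σ K, codim (k + 1) (W ⊔ linearForm b • 𝒮 σ K k) ≤
      greenBound (k + 1) (codim (k + 1) W) := by
  induction k generalizing W with
  | zero =>
    refine eventually_codim_sup_le_of_minimal hW fun b₀ _ hlt _ => ?_
    rw [zero_add, greenBound_one_left]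
    exact Nat.le_sub_one_of_lt hlt
  | succ k ihk =>
    induction hc : codim (k + 2) W using Nat.strong_induction_on generalizing W with
    | _ c ihc =>
      subst hc
      refine eventually_codim_sup_le_of_minimal hW fun b₀ hne hlt hmin => ?_
      have hsection := sup_le hW (smul_homogeneousSubmodule_le (linearForm_mem b₀) (k + 1))
      exact codim_sup_le_greenBound_of_minimal hW hne hmin (ihk colon_le)
        (ihc _ hlt hsection rfl)

end Green

section Restriction

variable {K : Type*} [Field K] {n : ℕ}

/-- Restriction of polynomials to the hyperplane `∑ i, b i * x_i = 0`, where `b 0 ≠ 0`; the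
coordinates `x_1, …, x_n` on the hyperplane are renumbered from `0`. -/
noncomputable def restrict (b : Fin (n + 1) → K) :
    MvPolynomial (Fin (n + 1)) K →ₐ[K] MvPolynomial (Fin n) K :=
  aeval (Fin.cons (-linearForm fun i => b i.succ / b 0) X)

theorem restrict_mem (b : Fin (n + 1) → K) {k : ℕ} {f : MvPolynomial (Fin (n + 1)) K}
    (hf : f ∈ 𝒮 (Fin (n + 1)) K k) : restrict b f ∈ 𝒮 (Fin n) K k := by
  have hX (i) : (Fin.cons (-linearForm fun i => b i.succ / b 0) X :
      Fin (n + 1) → MvPolynomial (Fin n) K) i ∈ 𝒮 (Fin n) K 1 := by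
    cases i using Fin.cases with
    | zero => exact neg_mem (linearForm_mem _)
    | succ i => exact isHomogeneous_X K i
  have h := IsHomogeneous.aeval (S := K) (m := k) (n := 1) hf _ hX
  rwa [one_mul] at h

theorem restrict_rename_succ (b : Fin (n + 1) → K) (f : MvPolynomial (Fin n) K) :
    restrict b (rename Fin.succ f) = f := by
  rw [restrict, aeval_rename]
  exact aeval_X_left_apply f

theorem map_restrict_homogeneousSubmodule (b : Fin (n + 1) → K) (k : ℕ) :
    (𝒮 (Fin (n + 1)) K k).map (restrict b).toLinearMap = 𝒮 (Fin n) K k := by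
  refine le_antisymm (Submodule.map_le_iff_le_comap.mpr fun f => restrict_mem b) fun f hf => ?_
  exact ⟨rename Fin.succ f, IsHomogeneous.rename_isHomogeneous hf, restrict_rename_succ b f⟩

theorem linearForm_eq_add (b : Fin (n + 1) → K) :
    linearForm b = b 0 • X 0 + rename Fin.succ (linearForm (Fin.tail b)) := by
  simp [linearForm, Fintype.linearCombination_apply, Fin.sum_univ_succ, Fin.tail]

theorem tail_eq_smul {b : Fin (n + 1) → K} (hb : b 0 ≠ 0) :
    Fin.tail b = b 0 • fun i : Fin n => b i.succ / b 0 := by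
  ext i
  simp [Fin.tail, mul_div_cancel₀ _ hb]

theorem linearForm_eq_smul_sub {b : Fin (n + 1) → K} (hb : b 0 ≠ 0) :
    linearForm b = b 0 • (X 0 - rename Fin.succ (restrict b (X 0))) := by
  simp only [linearForm_eq_add, tail_eq_smul hb, map_smul, restrict, aeval_X, Fin.cons_zero,
    map_neg, sub_neg_eq_add, smul_add]

theorem restrict_linearForm {b : Fin (n + 1) → K} (hb : b 0 ≠ 0) :
    restrict b (linearForm b) = 0 := by
  rw [linearForm_eq_smul_sub hb, map_smul, map_sub, restrict_rename_succ, sub_self, smul_zero]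

theorem linearForm_ne_zero {b : Fin (n + 1) → K} (hb : b 0 ≠ 0) : linearForm b ≠ 0 := fun h =>
  hb (by simpa [linearForm, Fintype.linearCombination_apply, Pi.single_apply] using
    congrArg (eval (Pi.single 0 1)) h)

theorem linearForm_dvd_sub_rename_restrict {b : Fin (n + 1) → K} (hb : b 0 ≠ 0)
    (f : MvPolynomial (Fin (n + 1)) K) : linearForm b ∣ f - rename Fin.succ (restrict b f) := by
  let π := Ideal.Quotient.mkₐ K (Ideal.span {linearForm b})
  have hπ : π = π.comp ((rename Fin.succ).comp (restrict b)) := by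
    refine algHom_ext fun i => ?_
    cases i using Fin.cases with
    | zero =>
      have hdvd : linearForm b ∣ X 0 - rename Fin.succ (restrict b (X 0)) := by
        refine ⟨C (b 0)⁻¹, ?_⟩
        rw [mul_comm, ← smul_eq_C_mul, linearForm_eq_smul_sub hb, inv_smul_smul₀ hb]
      exact Ideal.Quotient.eq.mpr (Ideal.mem_span_singleton.mpr hdvd)
    | succ i => simp [restrict]
  exact Ideal.mem_span_singleton.mp (Ideal.Quotient.eq.mp (AlgHom.congr_fun hπ f))

theorem homogeneousComponent_add_mul {σ : Type*} {a : ℕ} {w : MvPolynomial σ K}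
    (hw : w ∈ 𝒮 σ K a) (t : ℕ) (f : MvPolynomial σ K) :
    homogeneousComponent (a + t) (w * f) = w * homogeneousComponent t f := by
  induction f using MvPolynomial.induction_on' with
  | monomial u c =>
    have hu : monomial u c ∈ 𝒮 σ K u.degree := isHomogeneous_monomial c rfl
    rw [homogeneousComponent_of_mem hu, homogeneousComponent_of_mem (IsHomogeneous.mul hw hu)]
    simp
  | add p q hp hq => rw [mul_add, map_add, hp, hq, map_add, mul_add]

theorem exists_eq_linearForm_mul {b : Fin (n + 1) → K} (hb : b 0 ≠ 0) {k : ℕ}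
    {f : MvPolynomial (Fin (n + 1)) K} (hf : f ∈ 𝒮 (Fin (n + 1)) K (k + 1))
    (h : restrict b f = 0) : ∃ g ∈ 𝒮 (Fin (n + 1)) K k, f = linearForm b * g := by
  obtain ⟨g, hg⟩ := linearForm_dvd_sub_rename_restrict hb f
  rw [h, map_zero, sub_zero] at hg
  refine ⟨homogeneousComponent k g, homogeneousComponent_isHomogeneous k g, ?_⟩
  rw [← homogeneousComponent_add_mul (linearForm_mem b), ← hg, add_comm 1 k]
  exact (homogeneousComponent_eq_self hf).symm

variable {b : Fin (n + 1) → K} {k : ℕ} {Q : Submodule K (MvPolynomial (Fin (n + 1)) K)}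

theorem inf_ker_restrict (hb : b 0 ≠ 0) (hQ : Q ≤ 𝒮 (Fin (n + 1)) K (k + 1)) :
    Q ⊓ LinearMap.ker (restrict b).toLinearMap = linearForm b • colon k (linearForm b) Q := by
  rw [← inf_smul_homogeneousSubmodule]
  ext f
  refine and_congr_right fun hf => ⟨fun h => ?_, ?_⟩
  · obtain ⟨g, hg, rfl⟩ := exists_eq_linearForm_mul hb (hQ hf) h
    exact Submodule.smul_mem_pointwise_smul g _ _ hg
  · rintro ⟨g, -, rfl⟩
    simp [restrict_linearForm hb]

theorem finrank_map_restrict_add (hb : b 0 ≠ 0) (hQ : Q ≤ 𝒮 (Fin (n + 1)) K (k + 1)) :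
    finrank K (Q.map (restrict b).toLinearMap) + finrank K (colon k (linearForm b) Q) =
      finrank K Q := by
  have := Submodule.finiteDimensional_of_le hQ
  rw [← LinearMap.finrank_range_add_finrank_ker ((restrict b).toLinearMap.domRestrict Q),
    LinearMap.range_domRestrict, LinearMap.ker_domRestrict,
    ← finrank_smul (linearForm_ne_zero hb), ← inf_ker_restrict hb hQ]
  congr 1
  rw [← Submodule.finrank_map_subtype_eq, Submodule.map_comap_subtype]

theorem codim_map_restrict (hb : b 0 ≠ 0) (hQ : Q ≤ 𝒮 (Fin (n + 1)) K (k + 1)) :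
    codim (k + 1) (Q.map (restrict b).toLinearMap) =
      codim (k + 1) (Q ⊔ linearForm b • 𝒮 (Fin (n + 1)) K k) := by
  have hexact := codim_eq_codim_colon_add (linearForm_mem b) (linearForm_ne_zero hb) hQ
  have hrestr := finrank_map_restrict_add hb hQ
  have hrestr_top := finrank_map_restrict_add (k := k) hb le_rfl
  have hcolon_top : colon k (linearForm b) (𝒮 (Fin (n + 1)) K (k + 1)) = 𝒮 _ K k :=
    inf_eq_right.mpr fun f hf =>
      smul_homogeneousSubmodule_le (linearForm_mem b) k (Submodule.smul_mem_pointwise_smul f _ _ hf)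
  rw [map_restrict_homogeneousSubmodule, hcolon_top] at hrestr_top
  have := codim_add_finrank hQ
  have := codim_add_finrank (colon_le (k := k) (ℓ := linearForm b) (Q := Q))
  have := codim_add_finrank ((Submodule.map_mono hQ).trans_eq
    (map_restrict_homogeneousSubmodule b (k + 1)))
  omega

theorem map_restrict_pow_mul (b : Fin (n + 1) → K) (t : ℕ)
    (W : Submodule K (MvPolynomial (Fin (n + 1)) K)) :
    (𝒮 (Fin (n + 1)) K 1 ^ t * W).map (restrict b).toLinearMap =
      𝒮 (Fin n) K 1 ^ t * W.map (restrict b).toLinearMap := by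
  rw [Submodule.map_mul, Submodule.map_pow, map_restrict_homogeneousSubmodule]

end Restriction

section Koszul

open Matrix

variable {K A B : Type*} [CommRing K] [CommRing A] [Algebra K A] [CommRing B] [Algebra K B]

/-- The matrix `H` is alternating, with entries in `U`. Such a matrix encodes the combination of
Koszul syzygies `H *ᵥ y` of a vector `y`. -/
structure IsAlternating {ι : Type*} (U : Submodule K A) (H : Matrix ι ι A) : Prop where
  mem : ∀ i j, H i j ∈ U
  diag : ∀ i, H i i = 0
  swap : ∀ i j, H i j = -H j i

/-- Exactness of the Koszul complex of `y` at its first spot: every syzygy of `y` with entries in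
`V` is a combination, with coefficients in `U`, of the trivial syzygies
`y j * e i - y i * e j`. -/
def KoszulExact {ι : Type*} [Fintype ι] (y : ι → A) (U V : Submodule K A) : Prop :=
  ∀ g : ι → A, (∀ i, g i ∈ V) → y ⬝ᵥ g = 0 → ∃ H : Matrix ι ι A, IsAlternating U H ∧ g = H *ᵥ y

section Alternating

variable {ι : Type*} {U : Submodule K A}

theorem IsAlternating.dotProduct_mulVec_self [Fintype ι] {H : Matrix ι ι A}
    (hH : IsAlternating U H) (y : ι → A) : y ⬝ᵥ H *ᵥ y = 0 := by
  classical
  simp only [dotProduct, mulVec, Finset.mul_sum, ← Finset.sum_product']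
  refine Finset.sum_involution (fun p _ => p.swap) (fun p _ => ?_) (fun p _ hp heq => hp ?_)
    (fun _ _ => Finset.mem_univ _) fun p _ => p.swap_swap
  · simp only [Prod.fst_swap, Prod.snd_swap, hH.swap p.2 p.1]
    ring
  · rw [show p.1 = p.2 from congrArg Prod.snd heq, hH.diag]
    ring

theorem IsAlternating.exists_lift [LinearOrder ι] {φ : A →ₗ[K] B} {H : Matrix ι ι B}
    (hH : IsAlternating (U.map φ) H) :
    ∃ F : Matrix ι ι A, IsAlternating U F ∧ ∀ i j, φ (F i j) = H i j := by
  choose F hF hφF using hH.mem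
  refine ⟨.of fun i j => if i < j then F i j else if j < i then -F j i else 0,
    ⟨fun i j => ?_, fun i => by simp, fun i j => ?_⟩, fun i j => ?_⟩ <;>
  rcases lt_trichotomy i j with hij | rfl | hij
  all_goals simp_all [not_lt_of_gt, hH.diag, ← hH.swap]

end Alternating

variable {φ : A →ₐ[K] B} {ℓ : A} {U V : Submodule K A}

section Lift

variable {ι : Type*} [Fintype ι] [LinearOrder ι] {z : ι → A}

theorem KoszulExact.exists_eq_mulVec_add
    (hφ : KoszulExact (φ ∘ z) (U.map φ.toLinearMap) (V.map φ.toLinearMap))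
    (hzU : ∀ i, ∀ f ∈ U, z i * f ∈ V) (hker : ∀ f ∈ V, φ f = 0 → ∃ g ∈ U, f = ℓ * g)
    {g : ι → A} (hg : ∀ i, g i ∈ V) (hzg : φ (z ⬝ᵥ g) = 0) :
    ∃ H : Matrix ι ι A, IsAlternating U H ∧
      ∃ g' : ι → A, (∀ i, g' i ∈ U) ∧ g = H *ᵥ z + ℓ • g' := by
  obtain ⟨H', hH', hgH'⟩ := hφ (φ ∘ g) (fun i => Submodule.mem_map_of_mem (hg i))
    ((RingHom.map_dotProduct φ.toRingHom z g).symm.trans hzg)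
  obtain ⟨H, hH, hφH⟩ := hH'.exists_lift
  have hmem (i) : (g - H *ᵥ z) i ∈ V :=
    sub_mem (hg i) (Submodule.sum_mem V fun j _ => mul_comm (z j) (H i j) ▸ hzU j _ (hH.mem i j))
  have hzero (i) : φ ((g - H *ᵥ z) i) = 0 := by
    rw [Pi.sub_apply, map_sub, sub_eq_zero]
    refine (congrFun hgH' i).trans ?_
    simp [mulVec, dotProduct, ← hφH]
  choose g' hg' heq using fun i => hker _ (hmem i) (hzero i)
  exact ⟨H, hH, g', hg', eq_add_of_sub_eq' (funext heq)⟩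

theorem KoszulExact.exists_dotProduct_eq
    (hφ : KoszulExact (φ ∘ z) (U.map φ.toLinearMap) (V.map φ.toLinearMap))
    (hzU : ∀ i, ∀ f ∈ U, z i * f ∈ V) (hker : ∀ f ∈ V, φ f = 0 → ∃ g ∈ U, f = ℓ * g)
    {g : ι → A} (hg : ∀ i, g i ∈ V) (hzg : φ (z ⬝ᵥ g) = 0) :
    ∃ f ∈ V, z ⬝ᵥ g = ℓ * f := by
  obtain ⟨H, hH, g', hg', rfl⟩ := hφ.exists_eq_mulVec_add hzU hker hg hzg
  refine ⟨z ⬝ᵥ g', sum_mem fun i _ => hzU i _ (hg' i), ?_⟩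
  rw [dotProduct_add, hH.dotProduct_mulVec_self, zero_add, dotProduct_smul, smul_eq_mul]

end Lift

variable {m : ℕ} {z : Fin m → A}

theorem IsAlternating.cons {H : Matrix (Fin m) (Fin m) A} (hH : IsAlternating U H)
    {g : Fin m → A} (hg : ∀ i, g i ∈ U) :
    IsAlternating U (.of (vecCons (vecCons 0 (-g)) fun i => vecCons (g i) (H i))) where
  mem i j := by
    cases i using Fin.cases <;> cases j using Fin.cases <;> simp [hg, hH.mem]
  diag i := by cases i using Fin.cases <;> simp [hH.diag]
  swap i j := by
    cases i using Fin.cases <;> cases j using Fin.cases <;> simp [← hH.swap]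

theorem KoszulExact.cons (hφ : KoszulExact (φ ∘ z) (U.map φ.toLinearMap) (V.map φ.toLinearMap))
    (hzU : ∀ i, ∀ f ∈ U, z i * f ∈ V) (hker : ∀ f ∈ V, φ f = 0 → ∃ g ∈ U, f = ℓ * g)
    (hφℓ : φ ℓ = 0) (hℓ : IsLeftRegular ℓ) : KoszulExact (vecCons ℓ z) U V := by
  intro g hg hsum
  rw [cons_dotProduct] at hsum
  obtain ⟨H, hH, g', hg', htail⟩ := hφ.exists_eq_mulVec_add hzU hker (g := vecTail g)
    (fun i => hg i.succ) (by simpa [hφℓ] using congrArg φ hsum)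
  refine ⟨_, hH.cons hg', ?_⟩
  have hhead : vecHead g = -(z ⬝ᵥ g') := by
    rw [htail, dotProduct_add, hH.dotProduct_mulVec_self, zero_add, dotProduct_smul, smul_eq_mul,
      ← mul_add] at hsum
    exact eq_neg_of_add_eq_zero_left (hℓ (hsum.trans (mul_zero ℓ).symm))
  rw [← cons_head_tail g, hhead, htail]
  ext i
  cases i using Fin.cases <;> simp [mulVec, dotProduct_comm, add_comm]

theorem exists_eq_dotProduct_of_mem_span_mul {ι : Type*} [Fintype ι] {y : ι → A} {f : A}
    (hf : f ∈ Submodule.span K (Set.range y) * U) :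
    ∃ g : ι → A, (∀ i, g i ∈ U) ∧ f = y ⬝ᵥ g := by
  induction hf using Submodule.mul_induction_on' with
  | mem_mul_mem a ha u hu =>
    obtain ⟨c, rfl⟩ := (Submodule.mem_span_range_iff_exists_fun K).mp ha
    refine ⟨fun i => c i • u, fun i => U.smul_mem _ hu, ?_⟩
    simp [dotProduct, Finset.sum_mul]
  | add _ _ _ _ hx hy =>
    obtain ⟨g, hg, rfl⟩ := hx
    obtain ⟨g', hg', rfl⟩ := hy
    exact ⟨g + g', fun i => U.add_mem (hg i) (hg' i), (dotProduct_add y g g').symm⟩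

variable {T W : Submodule K A}

theorem mul_mem_pow_succ_mul {a f : A} {t : ℕ} (ha : a ∈ T) (hf : f ∈ T ^ t * W) :
    a * f ∈ T ^ (t + 1) * W := by
  rw [pow_succ', mul_assoc]
  exact Submodule.mul_mem_mul ha hf

theorem exists_eq_mul_of_koszulExact (hT : T = Submodule.span K (Set.range (vecCons ℓ z)))
    (hφℓ : φ ℓ = 0)
    (hφ : ∀ t, KoszulExact (φ ∘ z) ((T ^ t * W).map φ.toLinearMap)
      ((T ^ (t + 1) * W).map φ.toLinearMap))
    (hker : ∀ f ∈ T * W, φ f = 0 → ∃ g ∈ W, f = ℓ * g) (t : ℕ) :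
    ∀ f ∈ T ^ (t + 1) * W, φ f = 0 → ∃ g ∈ T ^ t * W, f = ℓ * g := by
  have hzT (i) : z i ∈ T := hT ▸ Submodule.subset_span ⟨i.succ, rfl⟩
  induction t with
  | zero => simpa using hker
  | succ t ih =>
    intro f hf hφf
    rw [pow_succ', mul_assoc] at hf
    nth_rewrite 1 [hT] at hf
    obtain ⟨g, hg, rfl⟩ := exists_eq_dotProduct_of_mem_span_mul hf
    rw [cons_dotProduct] at hφf ⊢
    obtain ⟨f', hf', htail⟩ := (hφ t).exists_dotProduct_eq
      (fun i _ hf => mul_mem_pow_succ_mul (hzT i) hf) ih (g := vecTail g) (fun i => hg i.succ)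
      (by simpa [hφℓ] using hφf)
    exact ⟨vecHead g + f', add_mem (hg 0) hf', by rw [htail, mul_add]⟩

end Koszul

section MacaulayBound

variable {σ K : Type*} [Field K] [Finite σ] [Infinite K] {d : ℕ}
  {W : Submodule K (MvPolynomial σ K)}

theorem codim_mul_le_codim_add_greenBound (hW : W ≤ 𝒮 σ K (d + 1)) :
    codim (d + 2) (𝒮 σ K 1 * W) ≤
      codim (d + 1) W + greenBound (d + 2) (codim (d + 2) (𝒮 σ K 1 * W)) := by
  have := Fintype.ofFinite σ
  have hSW := homogeneousSubmodule_one_mul_le hW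
  obtain ⟨b, hgreen⟩ := (eventually_codim_sup_le_greenBound (d + 1) hSW).exists
  have hℓW : linearForm b • W ≤ 𝒮 σ K 1 * W := by
    rintro _ ⟨f, hf, rfl⟩
    exact Submodule.mul_mem_mul (linearForm_mem b) hf
  exact (codim_le_codim_add (linearForm_mem b) hW hSW hℓW).trans
    (Nat.add_le_add_left hgreen _)

end MacaulayBound

section LinearSyzygies

variable {K : Type*} [Field K] {n : ℕ}

/-- The ideal generated by `W` has linear first syzygies: the Koszul complex of some linear forms
spanning all linear forms is exact at its first spot on that ideal, in all degrees above that
of `W`. -/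
def HasLinearSyzygies (W : Submodule K (MvPolynomial (Fin n) K)) : Prop :=
  ∃ y : Fin n → MvPolynomial (Fin n) K, 𝒮 (Fin n) K 1 = Submodule.span K (Set.range y) ∧
    ∀ t, KoszulExact y (𝒮 (Fin n) K 1 ^ t * W) (𝒮 (Fin n) K 1 ^ (t + 1) * W)

variable {b : Fin (n + 1) → K}

theorem homogeneousSubmodule_one_eq_span_cons (hb : b 0 ≠ 0)
    {y : Fin n → MvPolynomial (Fin n) K} (hy : 𝒮 (Fin n) K 1 = Submodule.span K (Set.range y)) :
    𝒮 (Fin (n + 1)) K 1 =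
      Submodule.span K (Set.range (Matrix.vecCons (linearForm b) (rename Fin.succ ∘ y))) := by
  have hy_mem (i) : y i ∈ 𝒮 (Fin n) K 1 := hy ▸ Submodule.subset_span ⟨i, rfl⟩
  refine le_antisymm (fun f hf => ?_) (Submodule.span_le.mpr ?_)
  · have hrestr : rename Fin.succ (restrict b f) ∈
        (Submodule.span K (Set.range y)).map (rename (R := K) Fin.succ).toLinearMap :=
      Submodule.mem_map_of_mem (hy ▸ restrict_mem b hf)
    rw [Submodule.map_span, ← Set.range_comp] at hrestr
    obtain ⟨g, hg, hfg⟩ := exists_eq_linearForm_mul (k := 0) hb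
      (sub_mem hf (IsHomogeneous.rename_isHomogeneous (restrict_mem b hf)))
      (by rw [map_sub, restrict_rename_succ, sub_self])
    rw [homogeneousSubmodule_zero] at hg
    obtain ⟨a, rfl⟩ := Submodule.mem_one.mp hg
    rw [mul_comm, ← Algebra.smul_def] at hfg
    rw [Matrix.range_cons, Set.singleton_union, Submodule.mem_span_insert]
    exact ⟨a, _, hrestr, sub_eq_iff_eq_add.mp hfg⟩
  · rw [Matrix.range_cons]
    rintro _ (rfl | ⟨i, rfl⟩)
    · exact linearForm_mem b
    · exact IsHomogeneous.rename_isHomogeneous (hy_mem i)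

variable {k : ℕ} {W : Submodule K (MvPolynomial (Fin (n + 1)) K)}

theorem pow_mul_le_homogeneousSubmodule {σ : Type*} {W : Submodule K (MvPolynomial σ K)}
    (hW : W ≤ 𝒮 σ K k) (t : ℕ) : 𝒮 σ K 1 ^ t * W ≤ 𝒮 σ K (k + t) := by
  induction t with
  | zero => simpa using hW
  | succ t ih =>
    rw [pow_succ', mul_assoc]
    exact homogeneousSubmodule_one_mul_le ih

/-- `ℓ` is a nonzerodivisor, in degrees at least `k`, modulo the ideal generated by the space `W`
of forms of degree `k`. -/
def IsRegularForm {σ : Type*} (k : ℕ) (ℓ : MvPolynomial σ K)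
    (W : Submodule K (MvPolynomial σ K)) : Prop :=
  ∀ t, colon (k + t) ℓ (𝒮 σ K 1 ^ (t + 1) * W) = 𝒮 σ K 1 ^ t * W

theorem HasLinearSyzygies.of_map_restrict (hb : b 0 ≠ 0) (hW : W ≤ 𝒮 (Fin (n + 1)) K k)
    (hcolon : colon k (linearForm b) (𝒮 (Fin (n + 1)) K 1 * W) = W)
    (h : HasLinearSyzygies (W.map (restrict b).toLinearMap)) :
    HasLinearSyzygies W ∧ IsRegularForm k (linearForm b) W := by
  obtain ⟨y, hy, hexact⟩ := h
  have hspan := homogeneousSubmodule_one_eq_span_cons hb hy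
  have hcomp : restrict b ∘ rename Fin.succ ∘ y = y := by
    ext1 i
    exact restrict_rename_succ b (y i)
  simp only [← map_restrict_pow_mul] at hexact
  rw [← hcomp] at hexact
  have hker : ∀ f ∈ 𝒮 (Fin (n + 1)) K 1 * W, restrict b f = 0 →
      ∃ g ∈ W, f = linearForm b * g := by
    intro f hf hzero
    obtain ⟨g, hg, rfl⟩ := exists_eq_linearForm_mul hb (homogeneousSubmodule_one_mul_le hW hf) hzero
    exact ⟨g, hcolon.le (mem_colon.mpr ⟨hf, hg⟩), rfl⟩
  have hkerpow := exists_eq_mul_of_koszulExact hspan (restrict_linearForm hb) hexact hker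
  have hne := linearForm_ne_zero hb
  refine ⟨⟨_, hspan, fun t => ?_⟩, fun t => ?_⟩
  · refine (hexact t).cons (fun i f hf => mul_mem_pow_succ_mul ?_ hf) (hkerpow t)
      (restrict_linearForm hb) (IsLeftCancelMulZero.mul_left_cancel_of_ne_zero hne)
    exact hspan.ge (Submodule.subset_span ⟨i.succ, rfl⟩)
  · refine le_antisymm (fun f hf => ?_) fun f hf => mem_colon.mpr
      ⟨mul_mem_pow_succ_mul (linearForm_mem b) hf, pow_mul_le_homogeneousSubmodule hW t hf⟩
    obtain ⟨g, hg, hfg⟩ := hkerpow t _ (mem_colon.mp hf).1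
      (by rw [map_mul, restrict_linearForm hb, zero_mul])
    exact mul_left_cancel₀ hne hfg ▸ hg

end LinearSyzygies

section Persistence

theorem eq_macaulayGrowth_of_sections {d : ℕ} {u v : ℕ → ℕ} (h₀ : v 0 = greenBound (d + 1) (u 0))
    (hv : ∀ t, v (t + 1) = macaulayGrowth (d + t + 1) (v t))
    (hu : ∀ t, u (t + 1) = u t + v (t + 1)) (t : ℕ) :
    u (t + 1) = macaulayGrowth (d + t + 1) (u t) := by
  have hstep {t} (h : v t = greenBound (d + t + 1) (u t)) :
      u (t + 1) = macaulayGrowth (d + t + 1) (u t) := by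
    rw [hu, hv, h, ← macaulayGrowth_eq_add (by simp)]
  refine hstep ?_
  induction t with
  | zero => exact h₀
  | succ t ih =>
    rw [hv, hstep ih, ih]
    exact (greenBound_macaulayGrowth _ _).symm

variable {K : Type*} [Field K] {n d : ℕ}

theorem colon_eq_and_codim_map_restrict {b : Fin (n + 1) → K}
    {W : Submodule K (MvPolynomial (Fin (n + 1)) K)} (hb : b 0 ≠ 0)
    (hW : W ≤ 𝒮 (Fin (n + 1)) K (d + 1))
    (hgrowth : codim (d + 2) (𝒮 (Fin (n + 1)) K 1 * W) = macaulayGrowth (d + 1) (codim (d + 1) W))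
    (hgreen : codim (d + 2) (𝒮 _ K 1 * W ⊔ linearForm b • 𝒮 _ K (d + 1)) ≤
      greenBound (d + 2) (codim (d + 2) (𝒮 (Fin (n + 1)) K 1 * W))) :
    colon (d + 1) (linearForm b) (𝒮 (Fin (n + 1)) K 1 * W) = W ∧
      codim (d + 2) (𝒮 (Fin n) K 1 * W.map (restrict b).toLinearMap) =
        macaulayGrowth (d + 1) (greenBound (d + 1) (codim (d + 1) W)) := by
  set Q := 𝒮 (Fin (n + 1)) K 1 * W with hQ
  have hQ_le : Q ≤ 𝒮 (Fin (n + 1)) K (d + 2) := homogeneousSubmodule_one_mul_le hW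
  have hcolon : W ≤ colon (d + 1) (linearForm b) Q := fun f hf =>
    mem_colon.mpr ⟨Submodule.mul_mem_mul (linearForm_mem b) hf, hW hf⟩
  have hanti := codim_anti hcolon colon_le
  have hexact : codim (d + 2) Q = codim (d + 1) (colon (d + 1) (linearForm b) Q) +
      codim (d + 2) (Q ⊔ linearForm b • 𝒮 _ K (d + 1)) :=
    codim_eq_codim_colon_add (linearForm_mem b) (linearForm_ne_zero hb) hQ_le
  have hsection : codim (d + 2) (𝒮 (Fin n) K 1 * W.map (restrict b).toLinearMap) =
      codim (d + 2) (Q ⊔ linearForm b • 𝒮 _ K (d + 1)) := by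
    rw [← codim_map_restrict hb hQ_le, hQ, ← pow_one (𝒮 (Fin (n + 1)) K 1), map_restrict_pow_mul,
      pow_one]
  rw [hgrowth, greenBound_macaulayGrowth] at hgreen
  rw [hgrowth, macaulayGrowth_eq_add (by simp)] at hexact
  exact ⟨(eq_of_le_of_codim_le hcolon colon_le (by omega)).symm, by omega⟩

theorem homogeneousSubmodule_succ_eq_bot {σ : Type*} [IsEmpty σ] (k : ℕ) :
    𝒮 σ K (k + 1) = ⊥ := by
  refine (Submodule.eq_bot_iff _).mpr fun f hf => ?_
  by_contra hne
  exact k.succ_ne_zero (IsHomogeneous.inj_right hf (isHomogeneous_of_isEmpty σ K f) hne)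

theorem codim_succ_eq_zero {σ : Type*} [IsEmpty σ] (k : ℕ)
    (W : Submodule K (MvPolynomial σ K)) : codim (k + 1) W = 0 := by
  rw [codim, homogeneousSubmodule_succ_eq_bot, finrank_bot, Nat.zero_sub]

theorem hasLinearSyzygies_fin_zero (W : Submodule K (MvPolynomial (Fin 0) K)) :
    HasLinearSyzygies W := by
  refine ⟨Fin.elim0, ?_, fun t g _ _ => ⟨0, ⟨?_, ?_, ?_⟩, ?_⟩⟩
  · rw [homogeneousSubmodule_succ_eq_bot, Set.range_eq_empty, Submodule.span_empty]
  · exact fun i => i.elim0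
  · exact fun i => i.elim0
  · exact fun i => i.elim0
  · exact Subsingleton.elim _ _

theorem IsRegularForm.codim_pow_succ_mul {b : Fin (n + 1) → K} {k : ℕ}
    {W : Submodule K (MvPolynomial (Fin (n + 1)) K)} (hb : b 0 ≠ 0)
    (hW : W ≤ 𝒮 (Fin (n + 1)) K k) (h : IsRegularForm k (linearForm b) W) (t : ℕ) :
    codim (k + t + 1) (𝒮 (Fin (n + 1)) K 1 ^ (t + 1) * W) =
      codim (k + t) (𝒮 (Fin (n + 1)) K 1 ^ t * W) +
        codim (k + t + 1) (𝒮 (Fin n) K 1 ^ (t + 1) * W.map (restrict b).toLinearMap) := by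
  have hpow : _ ≤ 𝒮 (Fin (n + 1)) K (k + t + 1) := pow_mul_le_homogeneousSubmodule hW (t + 1)
  have hexact := codim_eq_codim_colon_add (linearForm_mem b) (linearForm_ne_zero hb) hpow
  rwa [h t, ← codim_map_restrict hb hpow, map_restrict_pow_mul] at hexact

variable [Infinite K]

theorem greenBound_le_codim {σ : Type*} [Finite σ] {W : Submodule K (MvPolynomial σ K)} {c : ℕ}
    (hW : W ≤ 𝒮 σ K (d + 1))
    (h : codim (d + 2) (𝒮 σ K 1 * W) = macaulayGrowth (d + 1) (greenBound (d + 1) c)) :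
    greenBound (d + 1) c ≤ codim (d + 1) W := by
  have hmacaulay := codim_mul_le_codim_add_greenBound hW
  rw [h, greenBound_macaulayGrowth, macaulayGrowth_eq_add (by simp)] at hmacaulay
  exact Nat.le_of_add_le_add_right hmacaulay

theorem persistence_and_hasLinearSyzygies {W : Submodule K (MvPolynomial (Fin n) K)}
    (hW : W ≤ 𝒮 (Fin n) K (d + 1))
    (hgrowth : codim (d + 2) (𝒮 (Fin n) K 1 * W) = macaulayGrowth (d + 1) (codim (d + 1) W)) :
    (∀ t, codim (d + t + 2) (𝒮 (Fin n) K 1 ^ (t + 1) * W) =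
      macaulayGrowth (d + t + 1) (codim (d + t + 1) (𝒮 (Fin n) K 1 ^ t * W))) ∧
      HasLinearSyzygies W := by
  induction n with
  | zero =>
    refine ⟨fun t => ?_, hasLinearSyzygies_fin_zero W⟩
    rw [codim_succ_eq_zero, codim_succ_eq_zero, macaulayGrowth_zero]
  | succ n ih =>
    have hSW := homogeneousSubmodule_one_mul_le hW
    obtain ⟨b, hb, hgreenW, hgreenSW⟩ := ((eventually_generic_apply_ne_zero 0).and
      ((eventually_codim_sup_le_greenBound d hW).and
        (eventually_codim_sup_le_greenBound (d + 1) hSW))).exists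
    obtain ⟨hcolon, hgrowth'⟩ := colon_eq_and_codim_map_restrict hb hW hgrowth hgreenSW
    rw [← codim_map_restrict hb hW] at hgreenW
    have hW' := (Submodule.map_mono hW).trans_eq (map_restrict_homogeneousSubmodule b (d + 1))
    have hsection := le_antisymm hgreenW (greenBound_le_codim hW' hgrowth')
    rw [← hsection] at hgrowth'
    obtain ⟨hpersist, hsyz⟩ := ih hW' hgrowth'
    obtain ⟨hsyzW, hregular⟩ := HasLinearSyzygies.of_map_restrict hb hW hcolon hsyz
    refine ⟨eq_macaulayGrowth_of_sections (d := d)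
      (u := fun t => codim (d + t + 1) (𝒮 (Fin (n + 1)) K 1 ^ t * W))
      (v := fun t => codim (d + t + 1) (𝒮 (Fin n) K 1 ^ t * W.map (restrict b).toLinearMap))
      (by simpa using hsection) hpersist fun t => ?_, hsyzW⟩
    have hexact := hregular.codim_pow_succ_mul hb hW t
    rwa [add_right_comm d 1 t] at hexact

end Persistence

section HilbertFunction

variable {σ K : Type*} [Field K] {d : ℕ} {V : Submodule K (MvPolynomial σ K)}

/-- The Hilbert function `k ↦ dim_K (S / I)_k` of an ideal `I` of a polynomial ring `S` over `K`. -/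
noncomputable def hilbertFunction (I : Ideal (MvPolynomial σ K)) (k : ℕ) : ℕ :=
  codim k (I.restrictScalars K ⊓ 𝒮 σ K k)

theorem homogeneousComponent_mem_pow_mul (hV : V ≤ 𝒮 σ K d) {f : MvPolynomial σ K}
    (hf : f ∈ Ideal.span (V : Set (MvPolynomial σ K))) (t : ℕ) :
    homogeneousComponent (d + t) f ∈ 𝒮 σ K 1 ^ t * V := by
  obtain ⟨c, hc, rfl⟩ := Submodule.mem_span_set.mp hf
  rw [Finsupp.sum, map_sum]
  refine sum_mem fun v hv => ?_
  rw [smul_eq_mul, mul_comm (c v), homogeneousComponent_add_mul (hV (hc hv)), mul_comm v,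
    homogeneousSubmodule_one_pow]
  exact Submodule.mul_mem_mul (homogeneousComponent_isHomogeneous t _) (hc hv)

theorem restrictScalars_span_inf (hV : V ≤ 𝒮 σ K d) (t : ℕ) :
    (Ideal.span (V : Set (MvPolynomial σ K))).restrictScalars K ⊓ 𝒮 σ K (d + t) =
      𝒮 σ K 1 ^ t * V := by
  refine le_antisymm ?_ (le_inf (Submodule.mul_le.mpr fun a _ v hv => ?_)
    (pow_mul_le_homogeneousSubmodule hV t))
  · rintro f ⟨hf, hft⟩
    rw [← homogeneousComponent_eq_self hft]
    exact homogeneousComponent_mem_pow_mul hV hf t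
  · exact Ideal.mul_mem_left _ a (Ideal.subset_span hv)

theorem hilbertFunction_span (hV : V ≤ 𝒮 σ K d) (t : ℕ) :
    hilbertFunction (Ideal.span (V : Set (MvPolynomial σ K))) (d + t) =
      codim (d + t) (𝒮 σ K 1 ^ t * V) := by
  rw [hilbertFunction, restrictScalars_span_inf hV]

theorem hilbertFunction_succ_eq_macaulayGrowth {n : ℕ} [Infinite K]
    {V : Submodule K (MvPolynomial (Fin n) K)} (hd : 1 ≤ d) (hV : V ≤ 𝒮 (Fin n) K d)
    (hgrowth : hilbertFunction (Ideal.span (V : Set (MvPolynomial (Fin n) K))) (d + 1) =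
      macaulayGrowth d (hilbertFunction (Ideal.span (V : Set (MvPolynomial (Fin n) K))) d))
    {k : ℕ} (hk : d ≤ k) :
    hilbertFunction (Ideal.span (V : Set (MvPolynomial (Fin n) K))) (k + 1) =
      macaulayGrowth k (hilbertFunction (Ideal.span (V : Set (MvPolynomial (Fin n) K))) k) := by
  obtain ⟨d, rfl⟩ := Nat.exists_eq_add_of_le' hd
  obtain ⟨t, rfl⟩ := Nat.exists_eq_add_of_le hk
  have hzero := hilbertFunction_span hV 0
  rw [pow_zero, one_mul, add_zero] at hzero
  rw [hilbertFunction_span hV 1, pow_one, hzero] at hgrowth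
  rw [add_assoc, hilbertFunction_span hV, hilbertFunction_span hV, ← add_assoc,
    add_right_comm d 1 t]
  exact (persistence_and_hasLinearSyzygies hV hgrowth).1 t

end HilbertFunction

section Expansion

variable {c d : ℕ} {ε : ℕ → ℤ}

theorem strictMonoOn_of_isMacaulayExpansion (h : IsMacaulayExpansion c d ε) :
    StrictMonoOn (fun i => (((i + 1 : ℕ) : ℤ) + ε (i + 1)).toNat) (Set.Iio d) := by
  intro i _ j (hj : j < d) hij
  have := h.1 (i + 1) (by omega) (by omega)
  have := h.2.1 (i + 1) (j + 1) (by omega) (by omega) (by omega)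
  dsimp only
  omega

theorem sum_choose_succ_of_isMacaulayExpansion (h : IsMacaulayExpansion c d ε) :
    ∑ i ∈ Finset.Icc 1 d, (((i : ℤ) + ε i + 1).toNat).choose (i + 1) = macaulayGrowth d c := by
  have hshift (f : ℕ → ℕ) : ∑ i ∈ Finset.Icc 1 d, f i = ∑ i ∈ Finset.range d, f (i + 1) := by
    rw [Finset.range_eq_Ico, Finset.sum_Ico_add' f 0 d 1, zero_add, Finset.Ico_add_one_right_eq_Icc]
  rw [h.2.2, hshift, hshift, macaulayGrowth,
    cascadeSum_sum_choose _ (strictMonoOn_of_isMacaulayExpansion h)]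
  refine Finset.sum_congr rfl fun i hi => ?_
  have := h.1 (i + 1) (by omega) (by have := Finset.mem_range.mp hi; omega)
  congr 1
  omega

end Expansion

end Gotzmann

open Gotzmann in
theorem gotzmann_persistence_general {K : Type*} [Field K] [Infinite K] {n d : ℕ} (hd : 1 ≤ d)
    {V : Submodule K (MvPolynomial (Fin n) K)} (hV : V ≤ homogeneousSubmodule (Fin n) K d)
    {J : Ideal (MvPolynomial (Fin n) K)} (hJ : J = Ideal.span (V : Set (MvPolynomial (Fin n) K)))
    {ε : ℕ → ℤ} (hε : IsMacaulayExpansion (hilbertFunction J d) d ε)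
    (hgrowth : hilbertFunction J (d + 1) =
      ∑ i ∈ Finset.Icc 1 d, (((i : ℤ) + ε i + 1).toNat).choose (i + 1))
    {k : ℕ} (hk : d ≤ k) {δ : ℕ → ℤ} (hδ : IsMacaulayExpansion (hilbertFunction J k) k δ) :
    hilbertFunction J (k + 1) =
      ∑ i ∈ Finset.Icc 1 k, (((i : ℤ) + δ i + 1).toNat).choose (i + 1) := by
  subst hJ
  rw [sum_choose_succ_of_isMacaulayExpansion hε] at hgrowth
  rw [sum_choose_succ_of_isMacaulayExpansion hδ]
  exact hilbertFunction_succ_eq_macaulayGrowth hd hV hgrowth hk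

/-- **Gotzmann persistence.** Let `V ⊆ S_d` be a linear subspace, `J` the ideal
generated by `V`, `c = h_J(d)` with Macaulay expansion `(ε_d,…,ε_1)` in base `d`.
If `h_J(d+1) = c^⟨d⟩ = ∑ C(i+ε_i+1, i+1)`, then for every `k ≥ d` one has
`h_J(k+1) = (h_J(k))^⟨k⟩`, computed from the Macaulay expansion of `h_J(k)` in base `k`. -/
theorem gotzmann_persistence (n d : ℕ) (hd : 1 ≤ d)
    (V : Submodule ℂ (MvPolynomial (Fin (n + 1)) ℂ))
    (hV : V ≤ homogeneousSubmodule (Fin (n + 1)) ℂ d)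
    (J : Ideal (MvPolynomial (Fin (n + 1)) ℂ))
    (hJ : J = Ideal.span (V : Set (MvPolynomial (Fin (n + 1)) ℂ)))
    (c : ℕ) (hc : c = hilbertFn J d)
    (ε : ℕ → ℤ) (hε : IsMacaulayExpansion c d ε)
    (hgrowth : hilbertFn J (d + 1) =
      ∑ i ∈ Finset.Icc 1 d, (((i : ℤ) + ε i + 1).toNat).choose (i + 1)) :
    ∀ k : ℕ, d ≤ k → ∀ δ : ℕ → ℤ, IsMacaulayExpansion (hilbertFn J k) k δ →
      hilbertFn J (k + 1) =
        ∑ i ∈ Finset.Icc 1 k, (((i : ℤ) + δ i + 1).toNat).choose (i + 1) := by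
  subst hc
  exact fun k hk δ hδ => gotzmann_persistence_general hd hV hJ hε hgrowth hk hδ
end

section
/- Let S = ℂ[x_0, …, x_n], let I ⊆ S be a homogeneous ideal and let d ≥ 1 be an integer such that h_I(d) ≤ d and such that the degree-(d+1) part I_{d+1} = I ∩ S_{d+1} is base point free, i.e., for every nonzero point a ∈ ℂ^{n+1} there exists f ∈ I_{d+1} with f(a) ≠ 0. Then for every integer k ≥ d, either h_I(k+1) < h_I(k) or h_I(k) = 0. -/
open MvPolynomial

/-- An ideal of `ℂ[x_0,…,x_n]` is homogeneous if it contains all homogeneous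
components of its elements. -/
def IsHomogeneousIdeal {n : ℕ} (I : Ideal (MvPolynomial (Fin (n + 1)) ℂ)) : Prop :=
  ∀ f ∈ I, ∀ k : ℕ, homogeneousComponent k f ∈ I

/-!
Let `W` be the image of the linear forms in `S/I`, so that `h_I(k) = dim W ^ k`.

A case of Green's hyperplane restriction theorem: if `dim W ^ d ≤ d`, then `W ^ d = l • W ^ (d - 1)`
for some `l ∈ W`. It is proved by induction on `d` for the subspaces `c • W ^ d`, choosing `m ∈ W`
such that `c * m • W ^ (d - 1)` has maximal dimension, applying the induction hypothesis to `c * m`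
and perturbing `m` in all directions of `W`. Hence multiplication by `l` maps `W ^ k` onto
`W ^ (k + 1)` for all `k ≥ d - 1`, and `h_I` is non-increasing from degree `d - 1` on.

If `h_I(k + 1) = h_I(k) ≠ 0` for some `k ≥ d`, then multiplication by `l` is injective on `W ^ k`,
and the fractions `x_i / l` act on `W ^ k` as commuting operators. A common eigenvector of their
transposes, with eigenvalues `a_i`, is a functional `ψ` on `W ^ (k + 1)` with
`ψ (x_i v) = a_i ψ (l v)`. Such a functional is a nonzero multiple of evaluation at `a` on forms of
degree `k + 1`, so `a ≠ 0` is a base point of `I_{k+1}` and hence of `I_{d+1}`.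
-/

open scoped Pointwise

section LinearAlgebra

variable {K V Y : Type*} [Field K] [AddCommGroup V] [Module K V] [AddCommGroup Y] [Module K Y]
  [FiniteDimensional K V]

lemma exists_ne_zero_finrank_range_le_finrank_range_add_smul [Infinite K] (f g : V →ₗ[K] Y) :
    ∃ t : K, t ≠ 0 ∧ Module.finrank K (LinearMap.range f) ≤
      Module.finrank K (LinearMap.range (f + t • g)) := by
  obtain ⟨incl, hincl⟩ :=
    f.rangeRestrict.exists_rightInverse_of_surjective f.range_rangeRestrict
  obtain ⟨proj, hproj⟩ :=
    (LinearMap.range f).subtype.exists_leftInverse_of_injective (Submodule.ker_subtype _)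
  have proj_f_incl (y) : proj (f (incl y)) = y := by
    have f_incl : f (incl y) = y := congrArg Subtype.val (LinearMap.congr_fun hincl y)
    rw [f_incl]
    exact LinearMap.congr_fun hproj y
  -- In a splitting of `f`, the corner of `f + t • g` is `1 + t • N`, which is invertible unless
  -- `-t⁻¹` is an eigenvalue of `N`.
  let N : Module.End K (LinearMap.range f) := proj ∘ₗ g ∘ₗ incl
  obtain ⟨s, hs⟩ := ((Module.End.finite_spectrum N).insert 0).exists_notMem
  obtain ⟨hs0, hsN⟩ : s ≠ 0 ∧ s ∉ spectrum K N := by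
    simpa only [Set.mem_insert_iff, not_or] using hs
  refine ⟨-s⁻¹, neg_ne_zero.mpr (inv_ne_zero hs0), ?_⟩
  have smul_corner (y) : s • proj ((f + (-s⁻¹) • g) (incl y)) =
      (algebraMap K (Module.End K (LinearMap.range f)) s - N) y := by
    simp [N, proj_f_incl, smul_smul, hs0, Module.algebraMap_end_apply, sub_eq_add_neg]
  have corner_injective :=
    ((Module.End.isUnit_iff _).mp (spectrum.notMem_iff.mp hsN)).injective
  refine LinearMap.finrank_le_finrank_of_injective
    (f := (f + (-s⁻¹) • g).rangeRestrict ∘ₗ incl) fun x y hxy ↦ corner_injective ?_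
  have hxy' : (f + (-s⁻¹) • g) (incl x) = (f + (-s⁻¹) • g) (incl y) := congrArg Subtype.val hxy
  rw [← smul_corner, ← smul_corner, hxy']

lemma exists_common_eigenvector [IsAlgClosed K] [Nontrivial V] {ι : Type*}
    (T : ι → Module.End K V) (hT : ∀ i j, Commute (T i) (T j)) :
    ∃ v ≠ 0, ∃ μ : ι → K, ∀ i, T i v = μ i • v := by
  obtain ⟨P, ⟨hP, hPinv⟩, hPmin⟩ := exists_minimal_of_wellFoundedLT
    (fun P : Submodule K V ↦ P ≠ ⊥ ∧ ∀ i, ∀ v ∈ P, T i v ∈ P)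
    ⟨⊤, top_ne_bot, fun _ _ _ ↦ Submodule.mem_top⟩
  have exists_le_eigenspace (i : ι) : ∃ μ, P ≤ (T i).eigenspace μ := by
    have : Nontrivial P := P.nontrivial_iff_ne_bot.mpr hP
    obtain ⟨μ, hμ⟩ := Module.End.exists_eigenvalue ((T i).restrict (hPinv i))
    obtain ⟨v, hv⟩ := hμ.exists_hasEigenvector
    have hv_mem : (v : V) ∈ P ⊓ (T i).eigenspace μ :=
      ⟨v.2, Module.End.mem_eigenspace_iff.mpr (congrArg Subtype.val hv.apply_eq_smul)⟩
    have inf_ne_bot : P ⊓ (T i).eigenspace μ ≠ ⊥ :=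
      (Submodule.ne_bot_iff _).mpr ⟨v, hv_mem, fun h ↦ hv.2 (Subtype.ext h)⟩
    have inf_invariant (j : ι) (w : V) (hw : w ∈ P ⊓ (T i).eigenspace μ) :
        T j w ∈ P ⊓ (T i).eigenspace μ :=
      ⟨hPinv j w hw.1, Module.End.mapsTo_genEigenspace_of_comm (hT i j) μ 1 hw.2⟩
    exact ⟨μ, (hPmin ⟨inf_ne_bot, inf_invariant⟩ inf_le_left).trans inf_le_right⟩
  choose μ hμ using exists_le_eigenspace
  obtain ⟨v, hv, hv0⟩ := (Submodule.ne_bot_iff P).mp hP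
  exact ⟨v, hv0, μ, fun i ↦ Module.End.mem_eigenspace_iff.mp (hμ i hv)⟩

lemma exists_common_eigenfunctional [IsAlgClosed K] [Nontrivial V] {ι : Type*}
    (T : ι → Module.End K V) (hT : ∀ i j, Commute (T i) (T j)) :
    ∃ φ : Module.Dual K V, φ ≠ 0 ∧ ∃ μ : ι → K, ∀ i v, φ (T i v) = μ i * φ v := by
  obtain ⟨φ, hφ, μ, hμ⟩ := exists_common_eigenvector
    (fun i ↦ (T i).dualMap) fun i j ↦ LinearMap.ext fun ψ ↦ by
      change ψ ∘ₗ (T j * T i) = ψ ∘ₗ (T i * T j)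
      rw [(hT i j).eq]
  exact ⟨φ, hφ, μ, fun i v ↦ LinearMap.congr_fun (hμ i) v⟩

end LinearAlgebra

section Algebra

variable {K A : Type*} [Field K] [CommRing A] [Algebra K A]

instance finiteDimensional_pow (W : Submodule K A) [FiniteDimensional K W] (k : ℕ) :
    FiniteDimensional K ↥(W ^ k) :=
  .of_fg ((Module.Finite.iff_fg.mp ‹_›).pow k)

instance finiteDimensional_smul (a : A) (P : Submodule K A) [FiniteDimensional K P] :
    FiniteDimensional K ↥(a • P) :=
  Module.Finite.map P _

lemma range_mulLeft_comp_subtype (c : A) (P : Submodule K A) :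
    LinearMap.range (LinearMap.mulLeft K c ∘ₗ P.subtype) = c • P := by
  rw [LinearMap.range_comp, Submodule.range_subtype]
  rfl

lemma exists_ne_zero_finrank_smul_le_finrank_add_smul_smul [Infinite K] (a b : A)
    (P : Submodule K A) [FiniteDimensional K P] :
    ∃ t : K, t ≠ 0 ∧
      Module.finrank K ↥(a • P) ≤ Module.finrank K ↥((a + t • b) • P) := by
  obtain ⟨t, ht, hrank⟩ := exists_ne_zero_finrank_range_le_finrank_range_add_smul
    (LinearMap.mulLeft K a ∘ₗ P.subtype) (LinearMap.mulLeft K b ∘ₗ P.subtype)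
  have add_smul_eq : LinearMap.mulLeft K a ∘ₗ P.subtype + t • (LinearMap.mulLeft K b ∘ₗ P.subtype) =
      LinearMap.mulLeft K (a + t • b) ∘ₗ P.subtype := by
    ext x
    simp [add_mul]
  rw [add_smul_eq, range_mulLeft_comp_subtype, range_mulLeft_comp_subtype] at hrank
  exact ⟨t, ht, hrank⟩

variable {W : Submodule K A} {l : A}

lemma smul_pow_le_pow_succ (hl : l ∈ W) (k : ℕ) : l • W ^ k ≤ W ^ (k + 1) := by
  rintro _ ⟨w, hw, rfl⟩
  rw [pow_succ']
  exact Submodule.mul_mem_mul hl hw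

lemma mul_smul_pow_le_smul_pow_succ (hl : l ∈ W) (c : A) (k : ℕ) :
    (c * l) • W ^ k ≤ c • W ^ (k + 1) := by
  rw [mul_smul]
  exact smul_mono_right c (smul_pow_le_pow_succ hl k)

lemma pow_succ_le_smul_pow_of_le {d : ℕ} (h : W ^ (d + 1) ≤ l • W ^ d) {k : ℕ} (hk : d ≤ k) :
    W ^ (k + 1) ≤ l • W ^ k := by
  obtain ⟨e, rfl⟩ := Nat.exists_eq_add_of_le hk
  calc W ^ (d + e + 1) = W ^ (d + 1) * W ^ e := by ring
    _ ≤ (l • W ^ d) * W ^ e := by gcongr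
    _ = l • W ^ (d + e) := by rw [smul_mul_assoc, pow_add]

lemma exists_mem_forall_finrank_mul_smul_le (W P : Submodule K A) [FiniteDimensional K P] (c : A) :
    ∃ m ∈ W, ∀ m' ∈ W,
      Module.finrank K ↥((c * m') • P) ≤ Module.finrank K ↥((c * m) • P) := by
  have hbdd : BddAbove ((fun m ↦ Module.finrank K ↥((c * m) • P)) '' W) :=
    ⟨Module.finrank K P, by rintro _ ⟨m, -, rfl⟩; exact Submodule.finrank_map_le _ _⟩
  obtain ⟨m, hm, hmax⟩ := Set.Finite.exists_maximalFor' _ _ hbdd.finite ⟨0, W.zero_mem⟩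
  exact ⟨m, hm, fun m' hm' ↦ (le_total _ _).elim id (hmax hm')⟩

lemma smul_pow_le_mul_smul_pow_of_finrank_maximal [Infinite K] [FiniteDimensional K W]
    {c m : A} {d : ℕ} (hm : m ∈ W) (hl : l ∈ W)
    (hmax : ∀ m' ∈ W, Module.finrank K ↥((c * m') • W ^ (d + 1)) ≤
      Module.finrank K ↥((c * m) • W ^ (d + 1)))
    (hml : (c * m) • W ^ (d + 1) ≤ (c * m * l) • W ^ d) :
    c • W ^ (d + 2) ≤ (c * l) • W ^ (d + 1) := by
  have mul_right_comm_le {p : A} (hp : p ∈ W) :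
      (c * p * l) • W ^ d ≤ (c * l) • W ^ (d + 1) := by
    rw [mul_right_comm]
    exact mul_smul_pow_le_smul_pow_succ hp (c * l) d
  have mul_smul_le {p : A} (hp : p ∈ W) : (c * p) • W ^ (d + 1) ≤ (c * l) • W ^ (d + 1) := by
    obtain ⟨t, ht, hrank⟩ :=
      exists_ne_zero_finrank_smul_le_finrank_add_smul_smul (c * m * l) (c * p * l) (W ^ d)
    have hmtp : m + t • p ∈ W := W.add_mem hm (W.smul_mem t hp)
    rw [show c * m * l + t • (c * p * l) = c * (m + t • p) * l by
      simp only [Algebra.smul_def]; ring] at hrank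
    -- Maximality of the rank at `m` makes the perturbed inclusion an equality.
    have smul_perturbed_eq : (c * (m + t • p) * l) • W ^ d = (c * (m + t • p)) • W ^ (d + 1) :=
      Submodule.eq_of_le_of_finrank_le (mul_smul_pow_le_smul_pow_succ hl _ d)
        ((hmax _ hmtp).trans ((Submodule.finrank_mono hml).trans hrank))
    rintro _ ⟨w, hw, rfl⟩
    have perturbed_mem : c * (m + t • p) * w ∈ (c * l) • W ^ (d + 1) :=
      (smul_perturbed_eq.ge.trans (mul_right_comm_le hmtp)) ⟨w, hw, rfl⟩
    have unperturbed_mem : c * m * w ∈ (c * l) • W ^ (d + 1) :=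
      (hml.trans (mul_right_comm_le hm)) ⟨w, hw, rfl⟩
    convert Submodule.smul_mem _ t⁻¹ (sub_mem perturbed_mem unperturbed_mem) using 1
    simp [mul_add, add_mul, smul_smul, ht]
  rw [pow_succ' W (d + 1), Submodule.pointwise_smul_def, Submodule.map_le_iff_le_comap,
    Submodule.mul_le]
  intro p hp w hw
  rw [Submodule.mem_comap, DistribSMul.toLinearMap_apply, smul_eq_mul, ← mul_assoc]
  exact mul_smul_le hp ⟨w, hw, rfl⟩

theorem exists_smul_pow_succ_le_of_finrank_le [Infinite K] [FiniteDimensional K W] {d : ℕ} (c : A)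
    (h : Module.finrank K ↥(c • W ^ (d + 1)) ≤ d + 1) :
    ∃ l ∈ W, c • W ^ (d + 1) ≤ (c * l) • W ^ d := by
  induction d generalizing c with
  | zero =>
    obtain ⟨y, hy⟩ := ((Submodule.finrank_le_one_iff_isPrincipal _).mp h).principal
    obtain ⟨l, hl, rfl⟩ : y ∈ c • W ^ 1 := hy ▸ Submodule.mem_span_singleton_self y
    refine ⟨l, pow_one W ▸ hl, ?_⟩
    rw [zero_add, hy, pow_zero, ← Submodule.span_singleton_mul, mul_one]
    rfl
  | succ d ih =>
    by_contra! hcon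
    have finrank_mul_smul_le {m : A} (hm : m ∈ W) :
        Module.finrank K ↥((c * m) • W ^ (d + 1)) ≤ d + 1 := by
      have := Submodule.finrank_lt_finrank_of_lt
        ((mul_smul_pow_le_smul_pow_succ hm c (d + 1)).lt_of_not_ge (hcon m hm))
      lia
    obtain ⟨m, hm, hmax⟩ := exists_mem_forall_finrank_mul_smul_le W (W ^ (d + 1)) c
    obtain ⟨l, hl, hml⟩ := ih (c * m) (finrank_mul_smul_le hm)
    exact hcon l hl (smul_pow_le_mul_smul_pow_of_finrank_maximal hm hl hmax hml)

lemma eq_zero_of_mul_eq_zero_of_finrank_le {P Q : Submodule K A} [FiniteDimensional K P]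
    (hQ : Q ≤ l • P) (hPQ : Module.finrank K P ≤ Module.finrank K Q) {v : A} (hv : v ∈ P)
    (hlv : l * v = 0) : v = 0 := by
  let g : P →ₗ[K] A := LinearMap.mulLeft K l ∘ₗ P.subtype
  have range_g : LinearMap.range g = l • P := range_mulLeft_comp_subtype l P
  have ker_g : LinearMap.ker g = ⊥ := by
    have rank_nullity := LinearMap.finrank_range_add_finrank_ker g
    rw [range_g] at rank_nullity
    have := Submodule.finrank_mono hQ
    rw [← Submodule.finrank_eq_zero (R := K)]
    lia
  exact congrArg Subtype.val (LinearMap.ker_eq_bot'.mp ker_g ⟨v, hv⟩ hlv)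

lemma exists_functional_mul_eq_smul [IsAlgClosed K] {P Q : Submodule K A} [FiniteDimensional K P]
    {ι : Type*} (x : ι → A) (hP : P ≠ ⊥) (hPQ : P ≤ l • Q) (hxQ : ∀ i, ∀ u ∈ Q, x i * u ∈ P)
    (hinj : ∀ v ∈ P, l * v = 0 → v = 0) :
    ∃ (ψ : A →ₗ[K] K) (μ : ι → K), (∃ v ∈ P, ψ (l * v) ≠ 0) ∧
      ∀ i, ∀ v ∈ P, ψ (x i * v) = μ i * ψ (l * v) := by
  have : Nontrivial P := P.nontrivial_iff_ne_bot.mpr hP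
  obtain ⟨div, hdiv⟩ := (LinearMap.mulLeft K l ∘ₗ P.subtype).exists_leftInverse_of_injective
    (LinearMap.ker_eq_bot'.mpr fun v hv ↦ Subtype.ext (hinj v v.2 hv))
  have div_mul (v : P) : div (l * v) = v := LinearMap.congr_fun hdiv v
  -- `T i` is multiplication by the fraction `x i / l`; the `T i` commute because `P ≤ l • Q`.
  let T (i : ι) : Module.End K P := div ∘ₗ LinearMap.mulLeft K (x i) ∘ₗ P.subtype
  have T_mul {u : A} (hu : u ∈ Q) (i : ι) (hlu : l * u ∈ P) :
      T i ⟨l * u, hlu⟩ = ⟨x i * u, hxQ i u hu⟩ := by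
    change div (x i * (l * u)) = _
    rw [mul_left_comm]
    exact div_mul ⟨x i * u, hxQ i u hu⟩
  have T_comm (i j : ι) : Commute (T i) (T j) := by
    refine LinearMap.ext fun ⟨v, hv⟩ ↦ ?_
    obtain ⟨u, hu, rfl⟩ : ∃ u ∈ Q, l * u = v := hPQ hv
    rw [Module.End.mul_apply, Module.End.mul_apply, T_mul hu, T_mul hu]
    exact congrArg div (mul_left_comm (x i) (x j) u)
  obtain ⟨φ, hφ, μ, hμ⟩ := exists_common_eigenfunctional T T_comm
  refine ⟨φ ∘ₗ div, μ, ?_, fun i v hv ↦ ?_⟩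
  · obtain ⟨v, hv⟩ := DFunLike.ne_iff.mp hφ
    refine ⟨v, v.2, ?_⟩
    rwa [LinearMap.comp_apply, div_mul]
  · rw [LinearMap.comp_apply, LinearMap.comp_apply, div_mul ⟨v, hv⟩]
    exact hμ i ⟨v, hv⟩

end Algebra

section Polynomial

lemma functional_mul_eq_eval_mul {R σ : Type*} [CommSemiring R] {k : ℕ} {a : σ → R}
    {l : MvPolynomial σ R} (hl : l ∈ homogeneousSubmodule σ R 1) (ψ : MvPolynomial σ R →ₗ[R] R)
    (hψ : ∀ i, ∀ g ∈ homogeneousSubmodule σ R k, ψ (X i * g) = a i * ψ (l * g)) {m p : ℕ}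
    (hmp : m + p = k + 1) {f g : MvPolynomial σ R} (hf : f ∈ homogeneousSubmodule σ R m)
    (hg : g ∈ homogeneousSubmodule σ R p) : ψ (f * g) = eval a f * ψ (l ^ m * g) := by
  have linear_mul {x h : MvPolynomial σ R} (hx : x ∈ homogeneousSubmodule σ R 1)
      (hh : h ∈ homogeneousSubmodule σ R k) : ψ (x * h) = eval a x * ψ (l * h) := by
    rw [homogeneousSubmodule_one_eq_span_X] at hx
    induction hx using Submodule.span_induction with
    | mem x hx => obtain ⟨i, rfl⟩ := hx; rw [hψ i h hh, eval_X]
    | zero => simp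
    | add x y _ _ hx hy => rw [add_mul, map_add, hx, hy, map_add, add_mul]
    | smul c x _ hx => rw [smul_mul_assoc, map_smul, hx, smul_eval, smul_eq_mul, mul_assoc]
  rw [← homogeneousSubmodule_one_pow] at hf
  induction hf using Submodule.pow_induction_on_left' generalizing p g with
  | algebraMap r => simp [← smul_eq_C_mul]
  | add f₁ f₂ m _ _ ih₁ ih₂ => rw [add_mul, map_add, ih₁ hmp hg, ih₂ hmp hg, map_add, add_mul]
  | mem_mul x hx m f hf ih =>
    rw [homogeneousSubmodule_one_pow] at hf
    have hfg : f * g ∈ homogeneousSubmodule σ R k := by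
      obtain rfl : m + p = k := by lia
      exact IsHomogeneous.mul hf hg
    have hlg : l * g ∈ homogeneousSubmodule σ R (1 + p) := IsHomogeneous.mul hl hg
    calc ψ (x * f * g) = eval a x * ψ (f * (l * g)) := by
          rw [mul_assoc, linear_mul hx hfg, mul_left_comm]
      _ = eval a x * (eval a f * ψ (l ^ m * (l * g))) := by rw [ih (by lia) hlg]
      _ = eval a (x * f) * ψ (l ^ (m + 1) * g) := by
          rw [eval_mul, mul_assoc, pow_succ, mul_assoc (l ^ m)]

variable {K σ : Type*} [Field K]

/-- The image in `S/I` of the forms of degree `k`, that is `S_k / (I ∩ S_k)`. This makes sense for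
every ideal; when `I` is homogeneous it is the degree-`k` part of the graded ring `S/I`. -/
noncomputable def quotientForms (I : Ideal (MvPolynomial σ K)) (k : ℕ) :
    Submodule K (MvPolynomial σ K ⧸ I) :=
  (homogeneousSubmodule σ K k).map (Ideal.Quotient.mkₐ K I).toLinearMap

lemma quotientForms_eq_pow (I : Ideal (MvPolynomial σ K)) (k : ℕ) :
    quotientForms I k = quotientForms I 1 ^ k := by
  rw [quotientForms, quotientForms, ← Submodule.map_pow, homogeneousSubmodule_one_pow]

instance finiteDimensional_quotientForms [Finite σ] (I : Ideal (MvPolynomial σ K)) (k : ℕ) :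
    FiniteDimensional K (quotientForms I k) :=
  .of_fg ((homogeneousSubmodule_fg σ K k).map _)

lemma finrank_quotientForms_add_finrank_inf [Finite σ] (I : Ideal (MvPolynomial σ K)) (k : ℕ) :
    Module.finrank K (quotientForms I k) +
      Module.finrank K ↥(I.restrictScalars K ⊓ homogeneousSubmodule σ K k) =
      Module.finrank K (homogeneousSubmodule σ K k) := by
  have : FiniteDimensional K (homogeneousSubmodule σ K k) := .of_fg (homogeneousSubmodule_fg σ K k)
  let q := (Ideal.Quotient.mkₐ K I).toLinearMap
  have ker_q : LinearMap.ker q = I.restrictScalars K := by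
    ext f
    exact Ideal.Quotient.eq_zero_iff_mem
  have rank_nullity := LinearMap.finrank_range_add_finrank_ker
    (q ∘ₗ (homogeneousSubmodule σ K k).subtype)
  rwa [LinearMap.range_comp, Submodule.range_subtype, LinearMap.ker_comp, ker_q,
    ← Submodule.finrank_map_subtype_eq, Submodule.map_comap_subtype, inf_comm] at rank_nullity

lemma quotientForms_eq_bot_of_finrank_zero_eq_zero [Finite σ] (I : Ideal (MvPolynomial σ K))
    (h : Module.finrank K (quotientForms I 0) = 0) (k : ℕ) : quotientForms I k = ⊥ := by
  rw [Submodule.finrank_eq_zero] at h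
  have one_mem : 1 ∈ quotientForms I 0 :=
    ⟨1, isHomogeneous_one σ K, map_one (Ideal.Quotient.mkₐ K I)⟩
  rw [h, Submodule.mem_bot] at one_mem
  have : Subsingleton (MvPolynomial σ K ⧸ I) := subsingleton_of_zero_eq_one one_mem.symm
  exact Submodule.eq_bot_of_subsingleton

lemma exists_quotientForms_succ_le_smul_of_finrank_le [Infinite K] [Finite σ]
    (I : Ideal (MvPolynomial σ K)) {d : ℕ}
    (h : Module.finrank K (quotientForms I (d + 1)) ≤ d + 1) :
    ∃ l ∈ quotientForms I 1, ∀ k ≥ d, quotientForms I (k + 1) ≤ l • quotientForms I k := by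
  rw [quotientForms_eq_pow, ← one_smul (MvPolynomial σ K ⧸ I) (quotientForms I 1 ^ (d + 1))] at h
  obtain ⟨l, hl, hle⟩ := exists_smul_pow_succ_le_of_finrank_le 1 h
  rw [one_smul, one_mul] at hle
  refine ⟨l, hl, fun k hk ↦ ?_⟩
  rw [quotientForms_eq_pow I (k + 1), quotientForms_eq_pow I k]
  exact pow_succ_le_smul_pow_of_le hle hk

lemma exists_ne_zero_forall_eval_eq_zero [IsAlgClosed K] [Finite σ] {I : Ideal (MvPolynomial σ K)}
    {k : ℕ} {l : MvPolynomial σ K ⧸ I} (hl : l ∈ quotientForms I 1)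
    (hle : quotientForms I (k + 1) ≤ l • quotientForms I k)
    (hinj : ∀ v ∈ quotientForms I (k + 1), l * v = 0 → v = 0)
    (hne : quotientForms I (k + 1) ≠ ⊥) :
    ∃ a : σ → K, a ≠ 0 ∧ ∀ f ∈ I, f ∈ homogeneousSubmodule σ K (k + 2) → eval a f = 0 := by
  obtain ⟨l, hl, rfl⟩ := hl
  let q := Ideal.Quotient.mkₐ K I
  obtain ⟨φ, a, ⟨_, ⟨g, hg, rfl⟩, hφg⟩, hφ⟩ :=
    exists_functional_mul_eq_smul (fun i ↦ q (X i)) hne hle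
      (by
        rintro i _ ⟨u, hu, rfl⟩
        exact ⟨X i * u, add_comm 1 k ▸ IsHomogeneous.mul (isHomogeneous_X K i) hu,
          map_mul q _ _⟩) hinj
  let ψ : MvPolynomial σ K →ₗ[K] K := φ ∘ₗ q.toLinearMap
  have hψ (i : σ) (h) (hh : h ∈ homogeneousSubmodule σ K (k + 1)) :
      ψ (X i * h) = a i * ψ (l * h) := by
    simpa only [ψ, LinearMap.comp_apply, AlgHom.toLinearMap_apply, map_mul] using
      hφ i (q h) ⟨h, hh, rfl⟩
  have apply_form (f) (hf : f ∈ homogeneousSubmodule σ K (k + 2)) :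
      ψ f = eval a f * ψ (l ^ (k + 2)) := by
    simpa only [mul_one] using
      functional_mul_eq_eval_mul hl ψ hψ (add_zero (k + 2)) hf (isHomogeneous_one σ K)
  have hlg : l * g ∈ homogeneousSubmodule σ K (k + 2) :=
    add_comm 1 (k + 1) ▸ IsHomogeneous.mul hl hg
  have eval_mul_ne_zero : eval a (l * g) * ψ (l ^ (k + 2)) ≠ 0 := by
    rw [← apply_form _ hlg]
    simpa only [ψ, LinearMap.comp_apply, AlgHom.toLinearMap_apply, map_mul] using hφg
  refine ⟨a, ?_, fun f hfI hf ↦ ?_⟩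
  · rintro rfl
    apply left_ne_zero_of_mul eval_mul_ne_zero
    rw [eval_zero, constantCoeff_eq]
    exact hlg.coeff_eq_zero (by simp)
  · have hψf : ψ f = 0 := by
      change φ (Ideal.Quotient.mk I f) = 0
      rw [Ideal.Quotient.eq_zero_iff_mem.mpr hfI, map_zero]
    rw [apply_form f hf] at hψf
    exact (mul_eq_zero.mp hψf).resolve_right (right_ne_zero_of_mul eval_mul_ne_zero)

lemma exists_mem_homogeneousSubmodule_eval_ne_zero_of_le {I : Ideal (MvPolynomial σ K)} {m k : ℕ}
    (hmk : m ≤ k) {a : σ → K} (ha : a ≠ 0)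
    (h : ∃ f ∈ I, f ∈ homogeneousSubmodule σ K m ∧ eval a f ≠ 0) :
    ∃ f ∈ I, f ∈ homogeneousSubmodule σ K k ∧ eval a f ≠ 0 := by
  obtain ⟨f, hfI, hf, hfa⟩ := h
  obtain ⟨i, hi⟩ := Function.ne_iff.mp ha
  obtain ⟨e, rfl⟩ := Nat.exists_eq_add_of_le' hmk
  refine ⟨X i ^ e * f, I.mul_mem_left _ hfI, ?_, ?_⟩
  · exact IsHomogeneous.mul (isHomogeneous_X_pow i e) hf
  · rw [map_mul, map_pow, eval_X]
    exact mul_ne_zero (pow_ne_zero e hi) hfa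

theorem hilbert_fn_strictly_decreasing_of_base_point_free_general [IsAlgClosed K] [Finite σ]
    (I : Ideal (MvPolynomial σ K)) {d : ℕ} (hsmall : Module.finrank K (quotientForms I d) ≤ d)
    (hbpf : ∀ a : σ → K, a ≠ 0 →
      ∃ f ∈ I, f ∈ homogeneousSubmodule σ K (d + 1) ∧ eval a f ≠ 0) {k : ℕ} (hk : d ≤ k) :
    Module.finrank K (quotientForms I (k + 1)) < Module.finrank K (quotientForms I k) ∨
      Module.finrank K (quotientForms I k) = 0 := by
  by_contra! ⟨hge, hne⟩
  replace hne : quotientForms I k ≠ ⊥ := fun h ↦ hne (Submodule.finrank_eq_zero.mpr h)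
  obtain _ | d := d
  · exact hne (quotientForms_eq_bot_of_finrank_zero_eq_zero I (Nat.le_zero.mp hsmall) k)
  obtain ⟨l, hl, hle⟩ := exists_quotientForms_succ_le_smul_of_finrank_le I hsmall
  obtain ⟨j, rfl⟩ := Nat.exists_eq_add_of_le' (Nat.one_le_of_lt hk)
  have hinj (v) (hv : v ∈ quotientForms I (j + 1)) : l * v = 0 → v = 0 :=
    eq_zero_of_mul_eq_zero_of_finrank_le (hle (j + 1) (by lia)) hge hv
  obtain ⟨a, ha, hvanish⟩ :=
    exists_ne_zero_forall_eval_eq_zero hl (hle j (by lia)) hinj hne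
  obtain ⟨f, hfI, hf, hfa⟩ := exists_mem_homogeneousSubmodule_eval_ne_zero_of_le
    (Nat.succ_le_succ hk) ha (hbpf a ha)
  exact hfa (hvanish f hfI hf)

end Polynomial

lemma hilbertFn_eq_finrank_quotientForms {n : ℕ} (I : Ideal (MvPolynomial (Fin (n + 1)) ℂ))
    (k : ℕ) : hilbertFn I k = Module.finrank ℂ (quotientForms I k) :=
  Nat.sub_eq_of_eq_add (finrank_quotientForms_add_finrank_inf I k).symm

/-- If `I` is a homogeneous ideal with `h_I(d) ≤ d` whose degree-`(d+1)` part is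
base point free, then for every `k ≥ d` either `h_I(k+1) < h_I(k)` or `h_I(k) = 0`. -/
theorem hilbert_fn_strictly_decreasing_of_base_point_free (n d : ℕ) (hd : 1 ≤ d)
    (I : Ideal (MvPolynomial (Fin (n + 1)) ℂ)) (hI : IsHomogeneousIdeal I)
    (hsmall : hilbertFn I d ≤ d)
    (hbpf : ∀ a : Fin (n + 1) → ℂ, a ≠ 0 →
      ∃ f ∈ I, f ∈ homogeneousSubmodule (Fin (n + 1)) ℂ (d + 1) ∧ eval a f ≠ 0) :
    ∀ k : ℕ, d ≤ k → hilbertFn I (k + 1) < hilbertFn I k ∨ hilbertFn I k = 0 := by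
  simp only [hilbertFn_eq_finrank_quotientForms] at hsmall ⊢
  exact fun k ↦ hilbert_fn_strictly_decreasing_of_base_point_free_general I hsmall hbpf
end
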